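/- arXiv:1506.06377 — 3 statements merged into one kernel-verified Lean document; each statement's English description precedes it below -/
import Mathlib

section
/- For any state ω of a finite-dimensional multipartite system A₁...AₙB, the conditional secrecy monotone is nonnegative: Sₙ(A₁:...:Aₙ|B)_ω ≥ 0. -/
open Matrix
open scoped ComplexOrder

noncomputable section

/-- The von Neumann entropy, extended to the cone of positive trace-class operators by
`H(ρ) = Tr η(ρ) − η(Tr ρ)` with `η(x) = −x log x` (computed spectrally). -/
def vnEnt {n : Type*} [Fintype n] [DecidableEq n] (ρ : Matrix n n ℂ) : ℝ :=
  if h : ρ.IsHermitian then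
    (∑ i, Real.negMulLog (h.eigenvalues i)) - Real.negMulLog (∑ i, h.eigenvalues i)
  else 0

/-- A state (density operator): positive semidefinite with unit trace. -/
def IsState {n : Type*} [Fintype n] (ρ : Matrix n n ℂ) : Prop :=
  ρ.PosSemidef ∧ ρ.trace = 1

section Multipartite

variable {N : ℕ} {α : Fin N → Type*} {β : Type*}
  [∀ i, Fintype (α i)] [∀ i, DecidableEq (α i)] [Fintype β] [DecidableEq β]

/-- The marginal of an operator on `A₁ ⊗ ... ⊗ A_N ⊗ B` on the subsystems in `S` together
with `B` (all subsystems outside `S` are traced out). -/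
def margB (S : Finset (Fin N))
    (ω : Matrix ((∀ i, α i) × β) ((∀ i, α i) × β) ℂ) :
    Matrix ((∀ i : {x : Fin N // x ∈ S}, α i.1) × β)
      ((∀ i : {x : Fin N // x ∈ S}, α i.1) × β) ℂ :=
  Matrix.of fun p q =>
    ∑ g : ∀ i : {x : Fin N // x ∉ S}, α i.1,
      ω ((fun i => if h : i ∈ S then p.1 ⟨i, h⟩ else g ⟨i, h⟩), p.2)
        ((fun i => if h : i ∈ S then q.1 ⟨i, h⟩ else g ⟨i, h⟩), q.2)

end Multipartite

/-- The conditional secrecy monotone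
`S_N(A₁:...:A_N|B)_ω = Σ_i H(ω_{A₁...Â_i...A_N B}) − (N−1) H(ω_{A₁...A_N B}) − H(ω_B)`. -/
def secMon {N : ℕ} {α : Fin N → Type*} {β : Type*}
    [∀ i, Fintype (α i)] [∀ i, DecidableEq (α i)] [Fintype β] [DecidableEq β]
    (ω : Matrix ((∀ i, α i) × β) ((∀ i, α i) × β) ℂ) : ℝ :=
  (∑ i : Fin N, vnEnt (margB {i}ᶜ ω)) - ((N : ℝ) - 1) * vnEnt (margB Finset.univ ω)
    - vnEnt (margB ∅ ω)

/-- `U` is a unitary matrix diagonalizing `A`, with real diagonal entries `d`. -/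
structure SpectralDecomp {n : Type*} [Fintype n] [DecidableEq n]
    (A U : Matrix n n ℂ) (d : n → ℝ) : Prop where
  conjTranspose_mul_self : Uᴴ * U = 1
  mul_conjTranspose_self : U * Uᴴ = 1
  eq_mul : A = U * diagonal (fun i => (d i : ℂ)) * Uᴴ

section Spectral

variable {n : Type*} [Fintype n] [DecidableEq n]

theorem Matrix.IsHermitian.spectralDecomp {A : Matrix n n ℂ} (hA : A.IsHermitian) :
    SpectralDecomp A (hA.eigenvectorUnitary : Matrix n n ℂ) hA.eigenvalues where
  conjTranspose_mul_self := Unitary.coe_star_mul_self hA.eigenvectorUnitary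
  mul_conjTranspose_self := Unitary.coe_mul_star_self hA.eigenvectorUnitary
  eq_mul := by
    conv_lhs => rw [hA.spectral_theorem]
    rfl

theorem SpectralDecomp.sum_eigenvalues {A U : Matrix n n ℂ} {d : n → ℝ}
    (h : SpectralDecomp A U d) (hA : A.IsHermitian) (f : ℝ → ℝ) :
    ∑ i, f (hA.eigenvalues i) = ∑ i, f (d i) := by
  have hU : IsUnit U := ⟨⟨U, Uᴴ, h.mul_conjTranspose_self, h.conjTranspose_mul_self⟩, rfl⟩
  have hinv : U⁻¹ = Uᴴ := Matrix.inv_eq_left_inv h.conjTranspose_mul_self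
  have hc : A.charpoly = (diagonal (fun i => (d i : ℂ))).charpoly := by
    obtain ⟨u, rfl⟩ := hU
    rw [h.eq_mul, ← hinv]
    simp
  have hr := hA.roots_charpoly_eq_eigenvalues
  rw [hc, Matrix.charpoly_diagonal, Polynomial.roots_prod _ _ (by
    exact Finset.prod_ne_zero_iff.mpr fun i _ => Polynomial.X_sub_C_ne_zero _)] at hr
  simp only [Polynomial.roots_X_sub_C, Multiset.bind_singleton] at hr
  have := congrArg (fun s => (s.map (fun z : ℂ => f z.re)).sum) hr
  simpa [Multiset.map_map, Function.comp_def] using this.symm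

theorem SpectralDecomp.diagonal_eq {A U : Matrix n n ℂ} {d : n → ℝ}
    (h : SpectralDecomp A U d) : Uᴴ * A * U = diagonal (fun i => (d i : ℂ)) := by
  rw [h.eq_mul]
  calc _ = (Uᴴ * U) * diagonal (fun i => (d i : ℂ)) * (Uᴴ * U) := by
        simp only [Matrix.mul_assoc]
    _ = _ := by simp [h.conjTranspose_mul_self]

theorem SpectralDecomp.trace_eq {A U : Matrix n n ℂ} {d : n → ℝ}
    (h : SpectralDecomp A U d) : A.trace = ∑ i, (d i : ℂ) := by
  rw [h.eq_mul, Matrix.trace_mul_cycle, h.conjTranspose_mul_self, Matrix.one_mul,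
    Matrix.trace_diagonal]

/-- The quadratic functional whose supremum over `X` is the resolvent of the relative modular
operator of `ρ` and `σ`. -/
def modularForm (ρ σ : Matrix n n ℂ) (t : ℝ) (X : Matrix n n ℂ) : ℝ :=
  2 * (Xᴴ * ρ).trace.re - (Xᴴ * σ * X).trace.re - t * (X * ρ * Xᴴ).trace.re

/-- The maximum of `modularForm`, in terms of spectral data: `W` is the overlap matrix. -/
def modularSum (W : Matrix n n ℂ) (l m : n → ℝ) (t : ℝ) : ℝ :=
  ∑ i, ∑ j, Complex.normSq (W i j) * (l j ^ 2 / (m i + t * l j))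

variable {ρ σ U V : Matrix n n ℂ} {l m : n → ℝ}

theorem modularForm_eq_sum (hρ : SpectralDecomp ρ U l) (hσ : SpectralDecomp σ V m)
    (t : ℝ) (Y : Matrix n n ℂ) :
    modularForm ρ σ t (V * Y * Uᴴ) = ∑ i, ∑ j,
      (2 * (star (Y i j) * (Vᴴ * U) i j).re * l j
        - (m i + t * l j) * Complex.normSq (Y i j)) := by
  have hU := hρ.conjTranspose_mul_self
  have hV := hσ.conjTranspose_mul_self
  have hU' (Z : Matrix n n ℂ) : Uᴴ * (U * Z) = Z := by rw [← Matrix.mul_assoc, hU, Matrix.one_mul]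
  have hV' (Z : Matrix n n ℂ) : Vᴴ * (V * Z) = Z := by rw [← Matrix.mul_assoc, hV, Matrix.one_mul]
  have e1 : ((V * Y * Uᴴ)ᴴ * ρ).trace
      = (Yᴴ * ((Vᴴ * U) * diagonal (fun i => (l i : ℂ)))).trace := by
    rw [hρ.eq_mul, ← Matrix.mul_assoc, Matrix.trace_mul_comm]
    simp [Matrix.mul_assoc, hU']
  have e2 : ((V * Y * Uᴴ)ᴴ * σ * (V * Y * Uᴴ)).trace
      = (Yᴴ * (diagonal (fun i => (m i : ℂ)) * Y)).trace := by
    rw [hσ.eq_mul, ← Matrix.mul_assoc, Matrix.trace_mul_comm]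
    simp [Matrix.mul_assoc, hU', hV']
  have e3 : ((V * Y * Uᴴ) * ρ * (V * Y * Uᴴ)ᴴ).trace
      = (Y * diagonal (fun i => (l i : ℂ)) * Yᴴ).trace := by
    rw [hρ.eq_mul, Matrix.conjTranspose_mul, ← Matrix.mul_assoc, Matrix.trace_mul_comm,
      Matrix.conjTranspose_mul]
    rw [Matrix.trace_mul_comm]
    simp only [Matrix.conjTranspose_conjTranspose, Matrix.mul_assoc, hU']
    rw [Matrix.trace_mul_comm]
    simp [Matrix.mul_assoc, hV]
  rw [modularForm, e1, e2, e3]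
  simp only [Matrix.trace, Matrix.diag_apply, Matrix.mul_apply (M := Yᴴ),
    Matrix.mul_apply (N := Yᴴ), Matrix.mul_diagonal, Matrix.diagonal_mul,
    Matrix.conjTranspose_apply, Complex.re_sum]
  rw [Finset.sum_comm (s := Finset.univ) (t := Finset.univ)
    (f := fun j i => (star (Y i j) * ((Vᴴ * U) i j * (l j : ℂ))).re),
    Finset.sum_comm (s := Finset.univ) (t := Finset.univ)
    (f := fun j i => (star (Y i j) * ((m i : ℂ) * Y i j)).re)]
  simp only [Finset.mul_sum, ← Finset.sum_sub_distrib]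
  refine Finset.sum_congr rfl fun i _ => Finset.sum_congr rfl fun j _ => ?_
  simp [Complex.normSq_apply]
  ring

theorem modularForm_le (hρ : SpectralDecomp ρ U l) (hσ : SpectralDecomp σ V m)
    (hl : ∀ i, 0 < l i) (hm : ∀ i, 0 < m i) {t : ℝ} (ht : 0 ≤ t) (X : Matrix n n ℂ) :
    modularForm ρ σ t X ≤ modularSum (Vᴴ * U) l m t := by
  have hX : X = V * (Vᴴ * X * U) * Uᴴ := by
    calc X = (V * Vᴴ) * X * (U * Uᴴ) := by
          simp [hρ.mul_conjTranspose_self, hσ.mul_conjTranspose_self]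
      _ = _ := by simp only [Matrix.mul_assoc]
  rw [hX, modularForm_eq_sum hρ hσ, modularSum]
  refine Finset.sum_le_sum fun i _ => Finset.sum_le_sum fun j _ => ?_
  have hpos : 0 < m i + t * l j := add_pos_of_pos_of_nonneg (hm i) (mul_nonneg ht (hl j).le)
  generalize (Vᴴ * X * U) i j = y
  generalize (Vᴴ * U) i j = w
  rw [← mul_div_assoc, le_div_iff₀ hpos]
  simp only [Complex.normSq_apply, Complex.mul_re, Complex.star_def, Complex.conj_re,
    Complex.conj_im]
  nlinarith [sq_nonneg (w.re * l j - (m i + t * l j) * y.re),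
    sq_nonneg (w.im * l j - (m i + t * l j) * y.im)]

theorem exists_modularForm_eq (hρ : SpectralDecomp ρ U l) (hσ : SpectralDecomp σ V m)
    (hl : ∀ i, 0 < l i) (hm : ∀ i, 0 < m i) {t : ℝ} (ht : 0 ≤ t) :
    ∃ X, modularForm ρ σ t X = modularSum (Vᴴ * U) l m t := by
  refine ⟨V * Matrix.of (fun i j => ((l j / (m i + t * l j) : ℝ) : ℂ) * (Vᴴ * U) i j) * Uᴴ, ?_⟩
  rw [modularForm_eq_sum hρ hσ, modularSum]
  refine Finset.sum_congr rfl fun i _ => Finset.sum_congr rfl fun j _ => ?_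
  have hpos : 0 < m i + t * l j := add_pos_of_pos_of_nonneg (hm i) (mul_nonneg ht (hl j).le)
  simp only [Matrix.of_apply]
  generalize (Vᴴ * U) i j = w
  rw [star_mul', Complex.normSq_mul, Complex.normSq_ofReal, Complex.star_def,
    Complex.conj_ofReal, mul_assoc (Complex.ofReal _), ← Complex.normSq_eq_conj_mul_self,
    ← Complex.ofReal_mul, Complex.ofReal_re]
  field_simp
  ring

theorem sum_normSq_overlap_mul (hρ : SpectralDecomp ρ U l) (hσ : SpectralDecomp σ V m)
    (f : n → ℝ) :
    ∑ i, ∑ j, Complex.normSq ((Vᴴ * U) i j) * f j = ∑ j, f j := by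
  rw [Finset.sum_comm]
  refine Finset.sum_congr rfl fun j _ => ?_
  have h : (Vᴴ * U)ᴴ * (Vᴴ * U) = 1 := by
    calc _ = Uᴴ * (V * Vᴴ) * U := by simp [Matrix.mul_assoc]
      _ = 1 := by simp [hσ.mul_conjTranspose_self, hρ.conjTranspose_mul_self]
  have hj := congrFun (congrFun h j) j
  rw [Matrix.mul_apply, Matrix.one_apply_eq] at hj
  have hj' : ∑ i, Complex.normSq ((Vᴴ * U) i j) = 1 := by
    have : ((∑ i, Complex.normSq ((Vᴴ * U) i j) : ℝ) : ℂ) = 1 := by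
      rw [← hj, Complex.ofReal_sum]
      refine Finset.sum_congr rfl fun i _ => ?_
      rw [Complex.normSq_eq_conj_mul_self]
      rfl
    exact_mod_cast this
  rw [← Finset.sum_mul, hj', one_mul]

/-- The truncated relative entropy: the integral of `modularSum` over `[0, t]`. -/
def modularLog (W : Matrix n n ℂ) (l m : n → ℝ) (t : ℝ) : ℝ :=
  ∑ i, ∑ j, Complex.normSq (W i j) *
    (l j * (Real.log (m i + t * l j) - Real.log (m i)))

/-- The quantum relative entropy in terms of spectral data and the overlap matrix. -/
def relEntropySum (W : Matrix n n ℂ) (l m : n → ℝ) : ℝ :=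
  ∑ i, ∑ j, Complex.normSq (W i j) * (l j * (Real.log (l j) - Real.log (m i)))

omit [DecidableEq n] in
theorem hasDerivAt_modularLog (W : Matrix n n ℂ) (hl : ∀ i, 0 < l i) (hm : ∀ i, 0 < m i)
    {t : ℝ} (ht : 0 ≤ t) :
    HasDerivAt (modularLog W l m) (modularSum W l m t) t := by
  unfold modularLog modularSum
  refine HasDerivAt.fun_sum fun i _ => HasDerivAt.fun_sum fun j _ => HasDerivAt.const_mul _ ?_
  have hpos : 0 < m i + t * l j := add_pos_of_pos_of_nonneg (hm i) (mul_nonneg ht (hl j).le)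
  have h1 : HasDerivAt (fun t => m i + t * l j) (l j) t := by
    simpa using ((hasDerivAt_id t).mul_const (l j)).const_add (m i)
  convert ((h1.log hpos.ne').sub_const (Real.log (m i))).const_mul (l j) using 1
  ring

open Filter Topology in
theorem tendsto_modularLog (hρ : SpectralDecomp ρ U l) (hσ : SpectralDecomp σ V m)
    (hl : ∀ i, 0 < l i) (hm : ∀ i, 0 < m i) :
    Tendsto (fun t => modularLog (Vᴴ * U) l m t - Real.log t * ρ.trace.re) atTop
      (𝓝 (relEntropySum (Vᴴ * U) l m)) := by
  have key : ∀ᶠ t : ℝ in atTop, ∑ i, ∑ j, Complex.normSq ((Vᴴ * U) i j) *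
      (l j * (Real.log (m i * t⁻¹ + l j) - Real.log (m i))) =
      modularLog (Vᴴ * U) l m t - Real.log t * ρ.trace.re := by
    filter_upwards [eventually_gt_atTop 0] with t ht
    have htr : ρ.trace.re = ∑ j, l j := by simp [hρ.trace_eq]
    rw [htr, ← sum_normSq_overlap_mul hρ hσ l, modularLog, Finset.mul_sum,
      ← Finset.sum_sub_distrib]
    refine Finset.sum_congr rfl fun i _ => ?_
    rw [Finset.mul_sum, ← Finset.sum_sub_distrib]
    refine Finset.sum_congr rfl fun j _ => ?_
    have hpos : 0 < m i * t⁻¹ + l j := by have := hl j; have := hm i; positivity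
    have : m i + t * l j = t * (m i * t⁻¹ + l j) := by field_simp
    rw [this, Real.log_mul ht.ne' hpos.ne']
    ring
  refine Tendsto.congr' key ?_
  unfold relEntropySum
  refine tendsto_finsetSum _ fun i _ => tendsto_finsetSum _ fun j _ => ?_
  refine (Tendsto.const_mul _ (Tendsto.sub_const ?_ _)).const_mul _
  refine Tendsto.log ?_ (hl j).ne'
  simpa using (tendsto_inv_atTop_zero.const_mul (m i)).add_const (l j)

open Filter Topology in
/-- Monotonicity of the relative entropy under restriction of a state along a `*`-homomorphism. -/
theorem relEntropySum_mono {k : Type*} [Fintype k] [DecidableEq k]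
    {ρ' σ' U' V' : Matrix k k ℂ} {l' m' : k → ℝ}
    (hρ : SpectralDecomp ρ U l) (hσ : SpectralDecomp σ V m)
    (hl : ∀ i, 0 < l i) (hm : ∀ i, 0 < m i)
    (hρ' : SpectralDecomp ρ' U' l') (hσ' : SpectralDecomp σ' V' m')
    (hl' : ∀ i, 0 < l' i) (hm' : ∀ i, 0 < m' i)
    (Φ : Matrix k k ℂ → Matrix n n ℂ) (hone : Φ 1 = 1)
    (hmul : ∀ X Y, Φ (X * Y) = Φ X * Φ Y) (hstar : ∀ X, Φ Xᴴ = (Φ X)ᴴ)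
    (hΦρ : ∀ X, (Φ X * ρ).trace = (X * ρ').trace)
    (hΦσ : ∀ X, (Φ X * σ).trace = (X * σ').trace) :
    relEntropySum (V'ᴴ * U') l' m' ≤ relEntropySum (Vᴴ * U) l m := by
  have hform (t : ℝ) (X : Matrix k k ℂ) : modularForm ρ' σ' t X = modularForm ρ σ t (Φ X) := by
    have e1 : (X * ρ' * Xᴴ).trace = (Φ X * ρ * (Φ X)ᴴ).trace := by
      rw [Matrix.trace_mul_comm, ← Matrix.mul_assoc, ← hΦρ, hmul, hstar, Matrix.mul_assoc,
        Matrix.trace_mul_comm]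
    have e2 : (Xᴴ * σ' * X).trace = ((Φ X)ᴴ * σ * Φ X).trace := by
      rw [Matrix.trace_mul_comm, ← Matrix.mul_assoc, ← hΦσ, hmul, hstar, Matrix.mul_assoc,
        Matrix.trace_mul_comm]
    rw [modularForm, modularForm, e1, e2, ← hΦρ, hstar]
  have hsum {t : ℝ} (ht : 0 ≤ t) :
      modularSum (V'ᴴ * U') l' m' t ≤ modularSum (Vᴴ * U) l m t := by
    obtain ⟨X, hX⟩ := exists_modularForm_eq hρ' hσ' hl' hm' ht
    rw [← hX, hform]
    exact modularForm_le hρ hσ hl hm ht _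
  have hd {t : ℝ} (ht : 0 ≤ t) := (hasDerivAt_modularLog (Vᴴ * U) hl hm ht).sub
    (hasDerivAt_modularLog (V'ᴴ * U') hl' hm' ht)
  have hmono : MonotoneOn (modularLog (Vᴴ * U) l m - modularLog (V'ᴴ * U') l' m')
      (Set.Ici 0) := by
    refine monotoneOn_of_deriv_nonneg (convex_Ici 0)
      (fun t ht => (hd ht).continuousAt.continuousWithinAt)
      (fun t ht => (hd (interior_subset ht)).differentiableAt.differentiableWithinAt)
      (fun t ht => ?_)
    rw [(hd (interior_subset ht)).deriv]
    exact sub_nonneg.mpr (hsum (interior_subset ht))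
  have hle {t : ℝ} (ht : 0 ≤ t) :
      modularLog (V'ᴴ * U') l' m' t ≤ modularLog (Vᴴ * U) l m t := by
    have := hmono (Set.mem_Ici.mpr le_rfl) (Set.mem_Ici.mpr ht) ht
    simpa [modularLog] using this
  have htr : ρ.trace = ρ'.trace := by simpa [hone] using hΦρ 1
  refine le_of_tendsto_of_tendsto (tendsto_modularLog hρ' hσ' hl' hm')
    (tendsto_modularLog hρ hσ hl hm) ?_
  filter_upwards [eventually_ge_atTop 0] with t ht
  rw [htr]
  exact sub_le_sub_right (hle ht) _

end Spectral

/-- The von Neumann entropy `-Tr (A log A)` of a Hermitian matrix, without normalization. -/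
def spectralEntropy {n : Type*} [Fintype n] [DecidableEq n] (A : Matrix n n ℂ) : ℝ :=
  if h : A.IsHermitian then ∑ i, Real.negMulLog (h.eigenvalues i) else 0

section Entropy

variable {n : Type*} [Fintype n] [DecidableEq n]

theorem SpectralDecomp.isHermitian {A U : Matrix n n ℂ} {d : n → ℝ}
    (h : SpectralDecomp A U d) : A.IsHermitian := by
  rw [h.eq_mul, Matrix.IsHermitian, Matrix.conjTranspose_mul, Matrix.conjTranspose_mul,
    Matrix.diagonal_conjTranspose, Matrix.conjTranspose_conjTranspose, Matrix.mul_assoc]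
  congr 3
  ext i
  simp

theorem SpectralDecomp.spectralEntropy_eq {A U : Matrix n n ℂ} {d : n → ℝ}
    (h : SpectralDecomp A U d) : spectralEntropy A = ∑ i, Real.negMulLog (d i) := by
  rw [spectralEntropy, dif_pos h.isHermitian, h.sum_eigenvalues]

theorem vnEnt_eq_spectralEntropy {A : Matrix n n ℂ} (hA : A.IsHermitian) (htr : A.trace = 1) :
    vnEnt A = spectralEntropy A := by
  have h : ∑ i, hA.eigenvalues i = 1 := by
    have := hA.spectralDecomp.trace_eq
    rw [htr] at this
    exact_mod_cast this.symm
  rw [vnEnt, dif_pos hA, spectralEntropy, dif_pos hA, h, Real.negMulLog_one, sub_zero]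

theorem spectralEntropy_submatrix {k : Type*} [Fintype k] [DecidableEq k] {A : Matrix n n ℂ}
    (hA : A.IsHermitian) (e : k ≃ n) : spectralEntropy (A.submatrix e e) = spectralEntropy A := by
  have h := hA.spectralDecomp
  have h' : SpectralDecomp (A.submatrix e e)
      ((hA.eigenvectorUnitary : Matrix n n ℂ).submatrix e e) (hA.eigenvalues ∘ e) := by
    refine ⟨?_, ?_, ?_⟩
    · rw [Matrix.conjTranspose_submatrix, Matrix.submatrix_mul_equiv, h.conjTranspose_mul_self,
        Matrix.submatrix_one_equiv]
    · rw [Matrix.conjTranspose_submatrix, Matrix.submatrix_mul_equiv, h.mul_conjTranspose_self,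
        Matrix.submatrix_one_equiv]
    · have hd : diagonal (fun i => (((hA.eigenvalues ∘ e) i : ℝ) : ℂ))
          = (diagonal (fun i => (hA.eigenvalues i : ℂ))).submatrix e e := by
        rw [Matrix.submatrix_diagonal_equiv]
        rfl
      rw [hd, Matrix.conjTranspose_submatrix, Matrix.submatrix_mul_equiv,
        Matrix.submatrix_mul_equiv, ← h.eq_mul]
  rw [h'.spectralEntropy_eq, h.spectralEntropy_eq]
  exact Equiv.sum_comp e fun i => Real.negMulLog (hA.eigenvalues i)

theorem SpectralDecomp.add_smul_one {A U : Matrix n n ℂ} {d : n → ℝ}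
    (h : SpectralDecomp A U d) (c : ℝ) :
    SpectralDecomp (A + (c : ℂ) • (1 : Matrix n n ℂ)) U (fun i => d i + c) where
  conjTranspose_mul_self := h.conjTranspose_mul_self
  mul_conjTranspose_self := h.mul_conjTranspose_self
  eq_mul := by
    have : diagonal (fun i => ((d i + c : ℝ) : ℂ))
        = diagonal (fun i => (d i : ℂ)) + (c : ℂ) • (1 : Matrix n n ℂ) := by
      ext i j
      by_cases hij : i = j <;> simp [hij]
    rw [this, Matrix.mul_add, Matrix.add_mul, ← h.eq_mul]
    simp [h.mul_conjTranspose_self]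

open Filter Topology in
theorem tendsto_spectralEntropy_add_smul_one {A : Matrix n n ℂ} (hA : A.IsHermitian) (c : ℝ) :
    Tendsto (fun ε : ℝ => spectralEntropy (A + ((ε * c : ℝ) : ℂ) • (1 : Matrix n n ℂ)))
      (𝓝[>] 0) (𝓝 (spectralEntropy A)) := by
  have h := hA.spectralDecomp
  simp only [(h.add_smul_one _).spectralEntropy_eq, h.spectralEntropy_eq]
  have hc : Continuous fun ε : ℝ => ∑ i, Real.negMulLog (hA.eigenvalues i + ε * c) := by
    fun_prop
  simpa using (hc.tendsto 0).mono_left nhdsWithin_le_nhds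

/-- The relative entropy of `ρ` with respect to the image of its marginal `τ` under a
`*`-homomorphism is a difference of entropies. -/
theorem relEntropySum_map {k : Type*} [Fintype k] [DecidableEq k]
    {ρ U : Matrix n n ℂ} {l : n → ℝ} {τ V : Matrix k k ℂ} {m : k → ℝ}
    (hρ : SpectralDecomp ρ U l) (hτ : SpectralDecomp τ V m)
    (Ψ : Matrix k k ℂ → Matrix n n ℂ) (π : n → k)
    (hmul : ∀ X Y, Ψ (X * Y) = Ψ X * Ψ Y) (hstar : ∀ X, Ψ Xᴴ = (Ψ X)ᴴ)
    (hdiag : ∀ d, Ψ (diagonal d) = diagonal (d ∘ π))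
    (htr : ∀ X, (Ψ X * ρ).trace = (X * τ).trace) :
    SpectralDecomp (Ψ τ) (Ψ V) (m ∘ π) ∧
      relEntropySum ((Ψ V)ᴴ * U) l (m ∘ π) = spectralEntropy τ - spectralEntropy ρ := by
  have hone : Ψ 1 = 1 := by
    rw [← Matrix.diagonal_one, hdiag, ← Matrix.diagonal_one]
    rfl
  have hσ : SpectralDecomp (Ψ τ) (Ψ V) (m ∘ π) := by
    refine ⟨?_, ?_, ?_⟩
    · rw [← hstar, ← hmul, hτ.conjTranspose_mul_self, hone]
    · rw [← hstar, ← hmul, hτ.mul_conjTranspose_self, hone]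
    · conv_lhs => rw [hτ.eq_mul, hmul, hmul, hstar, hdiag]
      rfl
  refine ⟨hσ, ?_⟩
  have h1 : ∑ i, ∑ j, Complex.normSq (((Ψ V)ᴴ * U) i j) * (l j * Real.log (l j))
      = - spectralEntropy ρ := by
    rw [sum_normSq_overlap_mul hρ hσ (fun j => l j * Real.log (l j)), hρ.spectralEntropy_eq]
    simp [Real.negMulLog]
  have h2 : ∑ i, ∑ j, Complex.normSq (((Ψ V)ᴴ * U) i j) * (l j * Real.log (m (π i)))
      = - spectralEntropy τ := by
    set W := (Ψ V)ᴴ * U with hW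
    set L : Matrix k k ℂ := diagonal (fun i => ((Real.log (m i) : ℝ) : ℂ)) with hL
    have e1 : (Ψ (V * L * Vᴴ) * ρ).trace
        = ((Ψ L) * (W * diagonal (fun i => (l i : ℂ)) * Wᴴ)).trace := by
      rw [hmul, hmul, hstar, hρ.eq_mul, hW, Matrix.mul_assoc, Matrix.mul_assoc,
        Matrix.trace_mul_comm, Matrix.conjTranspose_mul, Matrix.conjTranspose_conjTranspose]
      simp only [Matrix.mul_assoc]
    have e2 : ((V * L * Vᴴ) * τ).trace = (L * diagonal (fun i => (m i : ℂ))).trace := by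
      rw [← hτ.diagonal_eq, Matrix.mul_assoc, Matrix.mul_assoc, Matrix.trace_mul_comm]
      simp only [Matrix.mul_assoc]
    have e3 := htr (V * L * Vᴴ)
    rw [e1, e2, hL, hdiag, Matrix.diagonal_mul_diagonal, Matrix.trace_diagonal] at e3
    have e4 := congrArg Complex.re e3
    rw [hτ.spectralEntropy_eq]
    simp only [Matrix.trace, Matrix.diag_apply, Matrix.diagonal_mul, Matrix.mul_apply (N := Wᴴ),
      Matrix.mul_diagonal, Complex.re_sum, Matrix.conjTranspose_apply, ← Complex.ofReal_mul,
      Complex.ofReal_re, Function.comp_apply, Complex.re_ofReal_mul] at e4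
    simp only [Real.negMulLog, neg_mul, Finset.sum_neg_distrib, neg_neg]
    simp only [mul_comm (m _)]
    rw [← e4]
    refine Finset.sum_congr rfl fun i _ => ?_
    rw [Finset.mul_sum]
    refine Finset.sum_congr rfl fun j _ => ?_
    simp [Complex.normSq_apply]
    ring
  simp only [relEntropySum, mul_sub, Finset.sum_sub_distrib, Function.comp_apply, h1, h2]
  ring

/-- Strong subadditivity in terms of commuting squares of `*`-homomorphisms. -/
theorem spectralEntropy_add_le_of_maps {k q r : Type*} [Fintype k] [DecidableEq k]
    [Fintype q] [DecidableEq q] [Fintype r] [DecidableEq r]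
    {ρ : Matrix n n ℂ} {ρ₁ : Matrix k k ℂ} {ρ₂ : Matrix q q ℂ} {ρ₃ : Matrix r r ℂ}
    (hρ : ρ.PosDef) (hρ₁ : ρ₁.PosDef) (hρ₂ : ρ₂.PosDef) (hρ₃ : ρ₃.PosDef)
    (Φ : Matrix k k ℂ → Matrix n n ℂ) (Φone : Φ 1 = 1)
    (Φmul : ∀ X Y, Φ (X * Y) = Φ X * Φ Y) (Φstar : ∀ X, Φ Xᴴ = (Φ X)ᴴ)
    (Ψ : Matrix q q ℂ → Matrix n n ℂ) (π : n → q)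
    (Ψmul : ∀ X Y, Ψ (X * Y) = Ψ X * Ψ Y) (Ψstar : ∀ X, Ψ Xᴴ = (Ψ X)ᴴ)
    (Ψdiag : ∀ d, Ψ (diagonal d) = diagonal (d ∘ π))
    (Θ : Matrix r r ℂ → Matrix k k ℂ) (ϖ : k → r)
    (Θmul : ∀ X Y, Θ (X * Y) = Θ X * Θ Y) (Θstar : ∀ X, Θ Xᴴ = (Θ X)ᴴ)
    (Θdiag : ∀ d, Θ (diagonal d) = diagonal (d ∘ ϖ))
    (hΦ : ∀ X, (Φ X * ρ).trace = (X * ρ₁).trace)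
    (hΨ : ∀ X, (Ψ X * ρ).trace = (X * ρ₂).trace)
    (hΘ : ∀ X, (Θ X * ρ₁).trace = (X * ρ₃).trace)
    (hΦΨ : ∀ X, (Φ X * Ψ ρ₂).trace = (X * Θ ρ₃).trace) :
    spectralEntropy ρ + spectralEntropy ρ₃ ≤ spectralEntropy ρ₁ + spectralEntropy ρ₂ := by
  obtain ⟨hσ, e⟩ := relEntropySum_map hρ.1.spectralDecomp hρ₂.1.spectralDecomp Ψ π Ψmul Ψstar
    Ψdiag hΨ
  obtain ⟨hσ', e'⟩ := relEntropySum_map hρ₁.1.spectralDecomp hρ₃.1.spectralDecomp Θ ϖ Θmul Θstar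
    Θdiag hΘ
  have := relEntropySum_mono hρ.1.spectralDecomp hσ hρ.eigenvalues_pos
    (fun i => hρ₂.eigenvalues_pos (π i)) hρ₁.1.spectralDecomp hσ' hρ₁.eigenvalues_pos
    (fun i => hρ₃.eigenvalues_pos (ϖ i)) Φ Φone Φmul Φstar hΦ hΦΨ
  rw [e, e'] at this
  linarith

end Entropy

section PartialTrace

open scoped Kronecker

variable {k g : Type*}

/-- The partial trace over the second tensor factor. -/
def traceRight [Fintype g] (M : Matrix (k × g) (k × g) ℂ) : Matrix k k ℂ :=
  Matrix.of fun x y => ∑ z, M (x, z) (y, z)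

theorem posSemidef_traceRight [Fintype g] {M : Matrix (k × g) (k × g) ℂ} (hM : M.PosSemidef) :
    (traceRight M).PosSemidef := by
  have : traceRight M = ∑ z, M.submatrix (fun x => (x, z)) (fun x => (x, z)) := by
    ext x y
    simp [traceRight, Matrix.sum_apply]
  rw [this]
  exact Matrix.posSemidef_sum _ fun z _ => hM.submatrix _

theorem posDef_traceRight [Fintype g] [Nonempty g] {M : Matrix (k × g) (k × g) ℂ}
    (hM : M.PosDef) : (traceRight M).PosDef := by
  have : traceRight M = ∑ z, M.submatrix (fun x => (x, z)) (fun x => (x, z)) := by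
    ext x y
    simp [traceRight, Matrix.sum_apply]
  rw [this]
  exact Matrix.posDef_sum Finset.univ_nonempty fun z _ =>
    hM.submatrix (Prod.mk_left_injective z)

theorem traceRight_add_smul_one [Fintype g] [DecidableEq k] [DecidableEq g]
    (M : Matrix (k × g) (k × g) ℂ) (c : ℝ) :
    traceRight (M + (c : ℂ) • (1 : Matrix (k × g) (k × g) ℂ))
      = traceRight M + ((c * Fintype.card g : ℝ) : ℂ) • (1 : Matrix k k ℂ) := by
  ext x y
  by_cases h : x = y
  · simp [traceRight, h, Finset.sum_add_distrib, mul_comm]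
  · simp [traceRight, h, Finset.sum_add_distrib]

variable [Fintype k] [Fintype g]

theorem trace_traceRight (M : Matrix (k × g) (k × g) ℂ) : (traceRight M).trace = M.trace := by
  simp [Matrix.trace, traceRight, Fintype.sum_prod_type]

variable {n : Type*} [DecidableEq g]

/-- The operator `X ⊗ 1`, transported along an identification of the tensor product. -/
def tensorOne (e : k × g ≃ n) (X : Matrix k k ℂ) : Matrix n n ℂ :=
  (X ⊗ₖ (1 : Matrix g g ℂ)).submatrix e.symm e.symm

omit [Fintype k] [Fintype g] in
theorem tensorOne_diagonal [DecidableEq k] [DecidableEq n] (e : k × g ≃ n) (d : k → ℂ) :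
    tensorOne e (diagonal d) = diagonal (d ∘ fun x => (e.symm x).1) := by
  rw [tensorOne, ← Matrix.diagonal_one, Matrix.diagonal_kronecker_diagonal,
    Matrix.submatrix_diagonal_equiv]
  simp [Function.comp_def]

omit [Fintype k] [Fintype g] in
theorem tensorOne_one [DecidableEq k] [DecidableEq n] (e : k × g ≃ n) :
    tensorOne e (1 : Matrix k k ℂ) = 1 := by
  simp [tensorOne]

omit [Fintype k] [Fintype g] in
theorem tensorOne_conjTranspose (e : k × g ≃ n) (X : Matrix k k ℂ) :
    tensorOne e Xᴴ = (tensorOne e X)ᴴ := by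
  rw [tensorOne, tensorOne, Matrix.conjTranspose_submatrix, Matrix.conjTranspose_kronecker,
    Matrix.conjTranspose_one]

variable [Fintype n]

theorem tensorOne_mul (e : k × g ≃ n) (X Y : Matrix k k ℂ) :
    tensorOne e (X * Y) = tensorOne e X * tensorOne e Y := by
  rw [tensorOne, tensorOne, tensorOne, Matrix.submatrix_mul_equiv, ← Matrix.mul_kronecker_mul,
    Matrix.one_mul]

theorem trace_tensorOne_mul (e : k × g ≃ n) (X : Matrix k k ℂ) (M : Matrix n n ℂ) :
    (tensorOne e X * M).trace = (X * traceRight (M.submatrix e e)).trace := by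
  simp only [Matrix.trace, Matrix.diag_apply, Matrix.mul_apply, ← Equiv.sum_comp e, tensorOne,
    Matrix.submatrix_apply, Equiv.symm_apply_apply, traceRight, Matrix.of_apply,
    Fintype.sum_prod_type, Matrix.kronecker_apply, Matrix.one_apply, mul_ite, mul_one, mul_zero,
    ite_mul, zero_mul, Finset.sum_ite_eq, Finset.mem_univ, if_true, Finset.mul_sum]
  exact Finset.sum_congr rfl fun x _ => Finset.sum_comm

end PartialTrace

section StrongSubadditivity

open scoped Kronecker

variable {a p c : Type*} [Fintype a] [Fintype p] [Fintype c]
  [DecidableEq a] [DecidableEq p] [DecidableEq c]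

/-- Cyclic rearrangement of the factors, moving the first one to the right. -/
def rotateFactors (a p c : Type*) : (p × c) × a ≃ (a × p) × c where
  toFun x := ((x.2, x.1.1), x.1.2)
  invFun x := ((x.1.2, x.2), x.1.1)
  left_inv _ := rfl
  right_inv _ := rfl

theorem spectralEntropy_strongSubadditivity_of_posDef [Nonempty a] [Nonempty c]
    {M : Matrix ((a × p) × c) ((a × p) × c) ℂ} (hM : M.PosDef) :
    spectralEntropy M
        + spectralEntropy (traceRight ((traceRight M).submatrix
            (Equiv.prodComm p a) (Equiv.prodComm p a)))
      ≤ spectralEntropy (traceRight M)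
        + spectralEntropy (traceRight
            (M.submatrix (rotateFactors a p c) (rotateFactors a p c))) := by
  have h₁ := posDef_traceRight hM
  refine spectralEntropy_add_le_of_maps hM h₁
    (posDef_traceRight (hM.submatrix (rotateFactors a p c).injective))
    (posDef_traceRight (h₁.submatrix (Equiv.prodComm p a).injective))
    (tensorOne (Equiv.refl _)) (tensorOne_one _) (tensorOne_mul _) (tensorOne_conjTranspose _)
    (tensorOne (rotateFactors a p c)) _ (tensorOne_mul _) (tensorOne_conjTranspose _)
    (tensorOne_diagonal _)
    (tensorOne (Equiv.prodComm p a)) _ (tensorOne_mul _) (tensorOne_conjTranspose _)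
    (tensorOne_diagonal _)
    (trace_tensorOne_mul _ · _) (trace_tensorOne_mul _ · _) (trace_tensorOne_mul _ · _)
    (fun X => ?_)
  rw [trace_tensorOne_mul]
  congr 2
  ext x y
  simp only [traceRight, tensorOne, Matrix.submatrix_apply, Matrix.of_apply,
    Matrix.kronecker_apply, rotateFactors, Equiv.prodComm_apply, Equiv.prodComm_symm,
    Equiv.coe_fn_symm_mk, Equiv.coe_fn_mk, Equiv.refl_apply,
    ← Finset.sum_mul, Prod.swap]
  rw [Finset.sum_comm]

open Filter Topology in
/-- Strong subadditivity of the von Neumann entropy. -/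
theorem spectralEntropy_strongSubadditivity [Nonempty a] [Nonempty c]
    {M : Matrix ((a × p) × c) ((a × p) × c) ℂ} (hM : M.PosSemidef) :
    spectralEntropy M
        + spectralEntropy (traceRight ((traceRight M).submatrix
            (Equiv.prodComm p a) (Equiv.prodComm p a)))
      ≤ spectralEntropy (traceRight M)
        + spectralEntropy (traceRight
            (M.submatrix (rotateFactors a p c) (rotateFactors a p c))) := by
  have h₁ := posSemidef_traceRight hM
  have h₂ := posSemidef_traceRight (hM.submatrix (rotateFactors a p c))
  have h₃ := posSemidef_traceRight (h₁.submatrix (Equiv.prodComm p a))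
  have t₀ := tendsto_spectralEntropy_add_smul_one hM.1 1
  have t₁ := tendsto_spectralEntropy_add_smul_one h₁.1 (Fintype.card c)
  have t₂ := tendsto_spectralEntropy_add_smul_one h₂.1 (Fintype.card a)
  have t₃ := tendsto_spectralEntropy_add_smul_one h₃.1 (Fintype.card c * Fintype.card a)
  refine le_of_tendsto_of_tendsto (t₀.add t₃) (t₁.add t₂) ?_
  filter_upwards [self_mem_nhdsWithin] with ε hε
  have hε' : (0 : ℂ) < ((ε : ℝ) : ℂ) := by exact_mod_cast hε
  have hpd : (M + (ε : ℂ) • (1 : Matrix ((a × p) × c) ((a × p) × c) ℂ)).PosDef :=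
    (Matrix.PosDef.one.smul hε').posSemidef_add hM
  have := spectralEntropy_strongSubadditivity_of_posDef hpd
  simpa only [traceRight_add_smul_one, Matrix.submatrix_add, Matrix.submatrix_smul,
    Matrix.submatrix_one_equiv, Pi.add_apply, Pi.smul_apply, mul_one, mul_assoc] using this

end StrongSubadditivity

section Marginals

variable {N : ℕ} {α : Fin N → Type*} {β : Type*}

/-- Joint configurations from configurations inside (with `B`) and outside `T`. -/
def glue (T : Finset (Fin N)) (p : (∀ i : {x : Fin N // x ∈ T}, α i.1) × β)
    (g : ∀ i : {x : Fin N // x ∉ T}, α i.1) : (∀ i, α i) × β :=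
  (fun i => if h : i ∈ T then p.1 ⟨i, h⟩ else g ⟨i, h⟩, p.2)

theorem glue_bijective (T : Finset (Fin N)) :
    Function.Bijective fun x : ((∀ i : {x : Fin N // x ∈ T}, α i.1) × β) ×
      (∀ i : {x : Fin N // x ∉ T}, α i.1) => glue T x.1 x.2 := by
  refine ⟨?_, fun y => ⟨((fun i => y.1 i, y.2), fun i => y.1 i), ?_⟩⟩
  · rintro ⟨⟨p, b⟩, g⟩ ⟨⟨p', b'⟩, g'⟩ h
    simp only [glue, Prod.mk.injEq] at h ⊢
    refine ⟨⟨funext fun i => ?_, h.2⟩, funext fun i => ?_⟩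
    · simpa [i.2] using congrFun h.1 i
    · simpa [i.2] using congrFun h.1 i
  · simp [glue]

/-- Restriction of joint configurations to `i`, to `S` together with `B`, and to the rest. -/
def splitFactors (S : Finset (Fin N)) (i : Fin N) (x : (∀ i, α i) × β) :
    (α i × ((∀ j : {x : Fin N // x ∈ S}, α j.1) × β)) ×
      (∀ j : {x : Fin N // x ∉ insert i S}, α j.1) :=
  ((x.1 i, (fun j => x.1 j, x.2)), fun j => x.1 j)

theorem splitFactors_bijective {S : Finset (Fin N)} {i : Fin N} (hi : i ∉ S) :
    Function.Bijective (splitFactors (α := α) (β := β) S i) := by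
  constructor
  · rintro ⟨x, b⟩ ⟨x', b'⟩ h
    simp only [splitFactors, Prod.mk.injEq] at h ⊢
    obtain ⟨⟨h1, h2, h3⟩, h4⟩ := h
    refine ⟨funext fun j => ?_, h3⟩
    by_cases hj : j ∈ insert i S
    · rcases Finset.mem_insert.mp hj with rfl | hj
      · exact h1
      · exact congrFun h2 ⟨j, hj⟩
    · exact congrFun h4 ⟨j, hj⟩
  · rintro ⟨⟨a, s, b⟩, c⟩
    refine ⟨(fun j => if h : j ∈ S then s ⟨j, h⟩ else
      if h' : j = i then cast (congrArg α h'.symm) a else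
      c ⟨j, by simp [h, h']⟩, b), ?_⟩
    simp only [splitFactors, Prod.mk.injEq]
    refine ⟨⟨by simp [hi], funext fun j => by simp, trivial⟩, funext fun j => ?_⟩
    have h1 : j.1 ∉ S := fun h => j.2 (Finset.mem_insert_of_mem h)
    have h2 : j.1 ≠ i := fun h => j.2 (Finset.mem_insert.mpr (Or.inl h))
    simp [h1, h2]

variable [∀ i, Fintype (α i)] [∀ i, DecidableEq (α i)] [Fintype β] [DecidableEq β]

theorem IsState.nonempty {n : Type*} [Fintype n] {ω : Matrix n n ℂ} (hω : IsState ω) :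
    Nonempty n := by
  by_contra h
  rw [not_nonempty_iff] at h
  simpa [Matrix.trace] using hω.2

/-- The entropy of a marginal, computed in any tensor product decomposition of the configuration
space which is compatible with the restriction to `T`. -/
theorem vnEnt_margB {ω : Matrix ((∀ i, α i) × β) ((∀ i, α i) × β) ℂ} (hω : IsState ω)
    {k g : Type*} [Fintype k] [DecidableEq k] [Fintype g] (T : Finset (Fin N))
    (E : (∀ i, α i) × β ≃ k × g) (e : (∀ i : {x : Fin N // x ∈ T}, α i.1) × β → k)
    (f : (∀ i : {x : Fin N // x ∉ T}, α i.1) → g)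
    (h : ∀ p x, E (glue T p x) = (e p, f x)) :
    vnEnt (margB T ω) = spectralEntropy (traceRight (ω.submatrix E.symm E.symm)) := by
  have hbij : Function.Bijective (Prod.map e f) := by
    have : Prod.map e f = E ∘ fun x => glue T x.1 x.2 := funext fun x => (h x.1 x.2).symm
    rw [this]
    exact E.bijective.comp (glue_bijective T)
  obtain ⟨y⟩ := hω.nonempty
  have : Nonempty ((∀ i : {x : Fin N // x ∈ T}, α i.1) × β) := ⟨(fun i => y.1 i, y.2)⟩
  have : Nonempty (∀ i : {x : Fin N // x ∉ T}, α i.1) := ⟨fun i => y.1 i⟩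
  obtain ⟨he, hf⟩ := Prod.map_bijective.mp hbij
  have hmarg : margB T ω = (traceRight (ω.submatrix E.symm E.symm)).submatrix
      (Equiv.ofBijective e he) (Equiv.ofBijective e he) := by
    ext p q
    simp only [traceRight, Matrix.submatrix_apply, Matrix.of_apply, margB,
      Equiv.ofBijective_apply]
    rw [← (Equiv.ofBijective f hf).sum_comp]
    refine Finset.sum_congr rfl fun x _ => ?_
    simp only [Equiv.ofBijective_apply, ← h, Equiv.symm_apply_apply]
    rfl
  have hpsd := posSemidef_traceRight (hω.1.submatrix E.symm)
  have htr : (traceRight (ω.submatrix E.symm E.symm)).trace = 1 := by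
    rw [trace_traceRight, ← hω.2]
    exact Equiv.sum_comp E.symm fun i => ω i i
  rw [hmarg, vnEnt_eq_spectralEntropy (hpsd.1.submatrix _), spectralEntropy_submatrix hpsd.1]
  rw [← htr]
  exact Equiv.sum_comp (Equiv.ofBijective e he) fun i =>
    traceRight (ω.submatrix E.symm E.symm) i i

theorem vnEnt_margB_univ {ω : Matrix ((∀ i, α i) × β) ((∀ i, α i) × β) ℂ} (hω : IsState ω) :
    vnEnt (margB Finset.univ ω) = spectralEntropy ω := by
  rw [vnEnt_margB hω Finset.univ (Equiv.prodPUnit.{0} _).symm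
    (fun p => (fun i => p.1 ⟨i, Finset.mem_univ i⟩, p.2)) (fun _ => PUnit.unit)
    (fun p x => by simp [glue])]
  congr 1
  ext x y
  simp [traceRight]

/-- Strong subadditivity for the marginals of a multipartite state. -/
theorem vnEnt_margB_strongSubadditivity {ω : Matrix ((∀ i, α i) × β) ((∀ i, α i) × β) ℂ}
    (hω : IsState ω) {S : Finset (Fin N)} {i : Fin N} (hi : i ∉ S) :
    vnEnt (margB Finset.univ ω) + vnEnt (margB S ω)
      ≤ vnEnt (margB (insert i S) ω) + vnEnt (margB {i}ᶜ ω) := by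
  let E := Equiv.ofBijective _ (splitFactors_bijective (α := α) (β := β) hi)
  obtain ⟨y⟩ := hω.nonempty
  have : Nonempty (α i) := ⟨y.1 i⟩
  have : Nonempty (∀ j : {x : Fin N // x ∉ insert i S}, α j.1) := ⟨fun j => y.1 j⟩
  have hne {j : Fin N} (hj : j ∈ S) : j ≠ i := fun h => hi (h ▸ hj)
  have hne' {j : Fin N} (hj : j ∉ insert i S) : j ≠ i :=
    fun h => hj (h ▸ Finset.mem_insert_self j S)
  have h₁ := vnEnt_margB hω (insert i S) E
    (fun p => (p.1 ⟨i, Finset.mem_insert_self i S⟩,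
      (fun j => p.1 ⟨j, Finset.mem_insert_of_mem j.2⟩, p.2)))
    id (fun p x => by
      simp only [E, Equiv.ofBijective_apply, splitFactors, glue, Prod.mk.injEq]
      refine ⟨⟨by simp, funext fun j => by simp, trivial⟩, funext fun j => ?_⟩
      exact dif_neg j.2)
  have h₂ := vnEnt_margB hω {i}ᶜ (E.trans (rotateFactors _ _ _).symm)
    (fun p => ((fun j => p.1 ⟨j, by simpa using hne j.2⟩, p.2),
      fun j => p.1 ⟨j, by simpa using hne' j.2⟩))
    (fun x => x ⟨i, by simp⟩) (fun p x => by
      simp only [E, Equiv.trans_apply, Equiv.ofBijective_apply, splitFactors, rotateFactors, glue,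
        Equiv.coe_fn_symm_mk, Prod.mk.injEq]
      refine ⟨⟨⟨funext fun j => ?_, trivial⟩, funext fun j => ?_⟩, by simp⟩
      · exact dif_pos _
      · exact dif_pos _)
  have h₃ := vnEnt_margB hω S (E.trans ((Equiv.prodAssoc _ _ _).trans
      ((Equiv.prodComm _ _).trans (Equiv.prodAssoc _ _ _))))
    id (fun x => (fun j => x ⟨j, fun h => j.2 (Finset.mem_insert_of_mem h)⟩, x ⟨i, hi⟩))
    (fun p x => by
      simp only [E, Equiv.trans_apply, Equiv.ofBijective_apply, splitFactors, glue,
        Equiv.prodAssoc_apply, Equiv.prodComm_apply, Prod.swap, Prod.mk.injEq]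
      refine ⟨Prod.ext (funext fun j => by simp) rfl, funext fun j => ?_, dif_neg hi⟩
      exact dif_neg _)
  have hssa := spectralEntropy_strongSubadditivity (hω.1.submatrix E.symm)
  rw [spectralEntropy_submatrix hω.1.1, ← vnEnt_margB_univ hω, ← h₁] at hssa
  convert hssa using 2
  · rw [h₃]
    congr 1
    ext x y
    simp only [traceRight, Matrix.of_apply, Matrix.submatrix_apply, Fintype.sum_prod_type]
    rw [Finset.sum_comm]
    rfl
  · exact h₂

end Marginals

/-- The conditional secrecy monotone is nonnegative on states. -/
theorem secMon_nonneg {N : ℕ} {α : Fin N → Type*} {β : Type*}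
    [∀ i, Fintype (α i)] [∀ i, DecidableEq (α i)] [Fintype β] [DecidableEq β]
    (ω : Matrix ((∀ i, α i) × β) ((∀ i, α i) × β) ℂ) (hω : IsState ω) :
    0 ≤ secMon ω := by
  have chain (S : Finset (Fin N)) :
      ∑ i ∈ S, (vnEnt (margB Finset.univ ω) - vnEnt (margB {i}ᶜ ω))
        ≤ vnEnt (margB S ω) - vnEnt (margB ∅ ω) := by
    induction S using Finset.induction_on with
    | empty => simp
    | insert i S hi ih =>
      rw [Finset.sum_insert hi]
      linarith [vnEnt_margB_strongSubadditivity hω hi]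
  have h := chain Finset.univ
  rw [Finset.sum_sub_distrib, Finset.sum_const, Finset.card_univ, Fintype.card_fin,
    nsmul_eq_mul] at h
  rw [secMon]
  linarith
end
end

section
/- Let F(ω) = Σ_k α_k H(ω_{X_k}) be a real linear combination of marginal entropies of states of a finite-dimensional n-partite system that is a concave function of the state. Then for any two states ω¹, ω² with ε = ½‖ω¹−ω²‖₁ < 1, |F(ω¹) − F(ω²)| ≤ ε·sup_{ω,ω'}|F(ω)−F(ω')| + (1+ε)·h₂(ε/(1+ε))·Σ_{k: α_k>0} α_k. -/
open Matrix
open scoped ComplexOrder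

noncomputable section

section Multipartite

variable {N : ℕ} {α : Fin N → Type*}
  [∀ i, Fintype (α i)] [∀ i, DecidableEq (α i)]

/-- The marginal of an operator on `A₁ ⊗ ... ⊗ A_N` on the subsystems in `S`
(all subsystems outside `S` are traced out). -/
def marg (S : Finset (Fin N)) (ω : Matrix (∀ i, α i) (∀ i, α i) ℂ) :
    Matrix (∀ i : {x : Fin N // x ∈ S}, α i.1) (∀ i : {x : Fin N // x ∈ S}, α i.1) ℂ :=
  Matrix.of fun p q =>
    ∑ g : ∀ i : {x : Fin N // x ∉ S}, α i.1,
      ω (fun i => if h : i ∈ S then p ⟨i, h⟩ else g ⟨i, h⟩)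
        (fun i => if h : i ∈ S then q ⟨i, h⟩ else g ⟨i, h⟩)

end Multipartite

/-- The trace norm of a matrix: the sum of its singular values. -/
def traceNorm {n : Type*} [Fintype n] [DecidableEq n] (M : Matrix n n ℂ) : ℝ :=
  ∑ i, Real.sqrt ((Matrix.posSemidef_conjTranspose_mul_self M).1.eigenvalues i)

/-- A linear combination `F(ω) = Σ_k c_k H(ω_{X_k})` of marginal entropies. -/
def entCombo {N : ℕ} {α : Fin N → Type*} [∀ i, Fintype (α i)] [∀ i, DecidableEq (α i)]
    {K : Type*} [Fintype K] (c : K → ℝ) (X : K → Finset (Fin N))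
    (ω : Matrix (∀ i, α i) (∀ i, α i) ℂ) : ℝ :=
  ∑ k, c k * vnEnt (marg (X k) ω)

section Spectral

variable {m n : Type*} [Fintype m] [DecidableEq m] [Fintype n] [DecidableEq n]

/-- A Hermitian matrix is diagonalized by a unitary matrix. -/
lemma exists_unitary_diagonalization {A : Matrix n n ℂ} (hA : A.IsHermitian) :
    ∃ U : Matrix n n ℂ, U * Uᴴ = 1 ∧ Uᴴ * U = 1 ∧
      A = U * diagonal (fun i => (hA.eigenvalues i : ℂ)) * Uᴴ := by
  refine ⟨hA.eigenvectorUnitary, ?_, ?_, ?_⟩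
  · exact Unitary.mul_star_self_of_mem hA.eigenvectorUnitary.2
  · exact Unitary.star_mul_self_of_mem hA.eigenvectorUnitary.2
  · exact hA.spectral_theorem

lemma sum_eigenvalues_eq_sum_roots {A : Matrix n n ℂ} (hA : A.IsHermitian) (f : ℝ → ℝ) :
    ∑ i, f (hA.eigenvalues i) = (A.charpoly.roots.map fun z => f z.re).sum := by
  rw [hA.roots_charpoly_eq_eigenvalues, Multiset.map_map]
  rfl

lemma sum_eigenvalues_conj_diagonal {U : Matrix n n ℂ} (hU : Uᴴ * U = 1) (d : n → ℝ)
    {A : Matrix n n ℂ} (hA : A.IsHermitian)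
    (hAU : A = U * diagonal (fun i => (d i : ℂ)) * Uᴴ) (f : ℝ → ℝ) :
    ∑ i, f (hA.eigenvalues i) = ∑ i, f (d i) := by
  have hc : A.charpoly = ∏ i, (Polynomial.X - Polynomial.C (d i : ℂ)) := by
    rw [hAU, charpoly_mul_comm, ← mul_assoc, hU, one_mul, charpoly_diagonal]
  rw [sum_eigenvalues_eq_sum_roots, hc, Polynomial.roots_prod]
  · simp
  · simp [Finset.prod_ne_zero_iff, Polynomial.X_sub_C_ne_zero]

/-- `B Bᴴ` and `Bᴴ B` have the same nonzero eigenvalues, with multiplicities. -/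
lemma sum_eigenvalues_mul_comm (B : Matrix m n ℂ) {A : Matrix m m ℂ} (hA : A.IsHermitian)
    (hAB : A = B * Bᴴ) {C : Matrix n n ℂ} (hC : C.IsHermitian) (hCB : C = Bᴴ * B)
    {f : ℝ → ℝ} (hf : f 0 = 0) :
    ∑ i, f (hA.eigenvalues i) = ∑ i, f (hC.eigenvalues i) := by
  have h := charpoly_mul_comm' B Bᴴ
  rw [← hAB, ← hCB] at h
  have hroots := congrArg (fun p : Polynomial ℂ => (p.roots.map fun z => f z.re).sum) h
  rw [Polynomial.roots_mul, Polynomial.roots_mul] at hroots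
  · simpa [hf, ← sum_eigenvalues_eq_sum_roots hA, ← sum_eigenvalues_eq_sum_roots hC,
      Multiset.map_nsmul, Multiset.sum_nsmul] using hroots
  · exact mul_ne_zero (pow_ne_zero _ Polynomial.X_ne_zero) (charpoly_monic _).ne_zero
  · exact mul_ne_zero (pow_ne_zero _ Polynomial.X_ne_zero) (charpoly_monic _).ne_zero

omit [Fintype m] [DecidableEq m] in
lemma re_diag_conj_diagonal (V : Matrix m n ℂ) (d : n → ℝ) (i : m) :
    ((V * diagonal (fun j => (d j : ℂ)) * Vᴴ) i i).re = ∑ j, Complex.normSq (V i j) * d j := by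
  rw [mul_apply, Complex.re_sum]
  refine Finset.sum_congr rfl fun j _ => ?_
  simp [mul_diagonal, Complex.normSq_apply]
  ring

omit [Fintype m] in
lemma sum_normSq_row {V : Matrix m n ℂ} (hV : V * Vᴴ = 1) (i : m) :
    ∑ j, Complex.normSq (V i j) = 1 := by
  have h := re_diag_conj_diagonal V (fun _ => 1) i
  simp only [Complex.ofReal_one, mul_one, diagonal_one, Matrix.mul_one, hV] at h
  simpa using h.symm

omit [Fintype n] in
lemma sum_normSq_col {V : Matrix m n ℂ} (hV : Vᴴ * V = 1) (j : n) :
    ∑ i, Complex.normSq (V i j) = 1 := by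
  have h := sum_normSq_row (V := Vᴴ) (by simpa using hV) j
  simpa [conjTranspose_apply] using h

/-- Peierls inequality for `x ↦ -x log x`: the entropy of the spectrum is at most the entropy of
the diagonal in any orthonormal basis. -/
lemma sum_negMulLog_eigenvalues_le_diag {A : Matrix n n ℂ} (hA : A.PosSemidef)
    {U : Matrix n n ℂ} (hU : U * Uᴴ = 1) :
    ∑ i, Real.negMulLog (hA.1.eigenvalues i) ≤ ∑ i, Real.negMulLog ((Uᴴ * A * U) i i).re := by
  have hU' : Uᴴ * U = 1 := mul_eq_one_comm.mp hU
  obtain ⟨W, hW, hW', hAW⟩ := exists_unitary_diagonalization hA.1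
  have hV : (Uᴴ * W) * (Uᴴ * W)ᴴ = 1 := by
    rw [conjTranspose_mul, conjTranspose_conjTranspose, Matrix.mul_assoc, ← Matrix.mul_assoc W, hW,
      Matrix.one_mul, hU']
  have hV' : (Uᴴ * W)ᴴ * (Uᴴ * W) = 1 := mul_eq_one_comm.mp hV
  have hconj : Uᴴ * A * U =
      (Uᴴ * W) * diagonal (fun i => (hA.1.eigenvalues i : ℂ)) * (Uᴴ * W)ᴴ := by
    conv_lhs => rw [hAW]
    simp only [conjTranspose_mul, conjTranspose_conjTranspose, Matrix.mul_assoc]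
  rw [hconj]
  simp only [re_diag_conj_diagonal]
  calc ∑ j, Real.negMulLog (hA.1.eigenvalues j)
      = ∑ j, ∑ i, Complex.normSq ((Uᴴ * W) i j) * Real.negMulLog (hA.1.eigenvalues j) := by
        simp_rw [← Finset.sum_mul, sum_normSq_col hV', one_mul]
    _ = ∑ i, ∑ j, Complex.normSq ((Uᴴ * W) i j) * Real.negMulLog (hA.1.eigenvalues j) :=
        Finset.sum_comm
    _ ≤ _ := Finset.sum_le_sum fun i _ => by
        simpa only [smul_eq_mul] using Real.concaveOn_negMulLog.le_map_sum
          (fun j _ => Complex.normSq_nonneg _) (sum_normSq_row hV i)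
          (fun j _ => Set.mem_Ici.mpr (hA.eigenvalues_nonneg j))

/-- If `A = B Bᴴ`, i.e. `A` is the sum of the rank-one operators given by the columns of `B`, then
the entropy of `A` is at most the entropy of the squared lengths of those columns. -/
lemma sum_negMulLog_eigenvalues_le_columns {A : Matrix m m ℂ} (hA : A.IsHermitian)
    (B : Matrix m n ℂ) (hAB : A = B * Bᴴ) :
    ∑ i, Real.negMulLog (hA.eigenvalues i) ≤ ∑ j, Real.negMulLog ((Bᴴ * B) j j).re := by
  have hC := posSemidef_conjTranspose_mul_self B
  rw [sum_eigenvalues_mul_comm B hA hAB hC.1 rfl Real.negMulLog_zero]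
  simpa using sum_negMulLog_eigenvalues_le_diag hC (U := 1) (by simp)

end Spectral

section Entropy

variable {n : Type*} [Fintype n] [DecidableEq n]

lemma IsState.sum_eigenvalues {ρ : Matrix n n ℂ} (hρ : IsState ρ) :
    ∑ i, hρ.1.1.eigenvalues i = 1 := by
  have h := hρ.2.symm.trans hρ.1.1.trace_eq_sum_eigenvalues
  exact Complex.ofReal_injective (by simpa using h.symm)

lemma IsState.vnEnt_eq {ρ : Matrix n n ℂ} (hρ : IsState ρ) :
    vnEnt ρ = ∑ i, Real.negMulLog (hρ.1.1.eigenvalues i) := by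
  rw [vnEnt, dif_pos hρ.1.1, hρ.sum_eigenvalues, Real.negMulLog_one, sub_zero]

lemma IsState.abs_vnEnt_le {ρ : Matrix n n ℂ} (hρ : IsState ρ) :
    |vnEnt ρ| ≤ Fintype.card n := by
  have h0 := hρ.1.eigenvalues_nonneg
  have h1 : ∀ i, hρ.1.1.eigenvalues i ≤ 1 := fun i => by
    rw [← hρ.sum_eigenvalues]
    exact Finset.single_le_sum (fun j _ => h0 j) (Finset.mem_univ i)
  rw [hρ.vnEnt_eq, abs_of_nonneg (Finset.sum_nonneg fun i _ => Real.negMulLog_nonneg (h0 i) (h1 i))]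
  calc ∑ i, Real.negMulLog (hρ.1.1.eigenvalues i) ≤ ∑ _i : n, (1 : ℝ) :=
        Finset.sum_le_sum fun i _ => by
          linarith [Real.negMulLog_le_one_sub_self (h0 i), h0 i]
    _ = Fintype.card n := by simp

omit [DecidableEq n] in
lemma IsState.mix {ρ σ : Matrix n n ℂ} (hρ : IsState ρ) (hσ : IsState σ) {t : ℝ}
    (h0 : 0 ≤ t) (h1 : t ≤ 1) : IsState (t • ρ + (1 - t) • σ) := by
  refine ⟨(hρ.1.smul h0).add (hσ.1.smul (sub_nonneg.mpr h1)), ?_⟩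
  rw [trace_add, trace_smul, trace_smul, hρ.2, hσ.2, ← add_smul]
  simp

/-- Concavity of the von Neumann entropy. -/
lemma IsState.mix_le_vnEnt {ρ σ : Matrix n n ℂ} (hρ : IsState ρ) (hσ : IsState σ) {t : ℝ}
    (h0 : 0 ≤ t) (h1 : t ≤ 1) :
    t * vnEnt ρ + (1 - t) * vnEnt σ ≤ vnEnt (t • ρ + (1 - t) • σ) := by
  have hA := hρ.mix hσ h0 h1
  rw [hA.vnEnt_eq, hρ.vnEnt_eq, hσ.vnEnt_eq]
  obtain ⟨U, hU, hU', hAU⟩ := exists_unitary_diagonalization hA.1.1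
  have hdiag : ∀ i, hA.1.1.eigenvalues i
      = t * ((Uᴴ * ρ * U) i i).re + (1 - t) * ((Uᴴ * σ * U) i i).re := by
    intro i
    have h : Uᴴ * (t • ρ + (1 - t) • σ) * U
        = diagonal (fun i => (hA.1.1.eigenvalues i : ℂ)) := by
      conv_lhs => rw [hAU]
      rw [Matrix.mul_assoc, Matrix.mul_assoc, hU', Matrix.mul_one, ← Matrix.mul_assoc, hU',
        Matrix.one_mul]
    rw [Matrix.mul_add, Matrix.add_mul, Matrix.mul_smul, Matrix.mul_smul, Matrix.smul_mul,
      Matrix.smul_mul] at h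
    have h' := congrArg Complex.re (congrFun (congrFun h i) i)
    simpa using h'.symm
  have hnonneg : ∀ {τ : Matrix n n ℂ}, IsState τ → ∀ i, 0 ≤ ((Uᴴ * τ * U) i i).re :=
    fun hτ i => (Complex.le_def.mp (hτ.1.conjTranspose_mul_mul_same U).diag_nonneg).1
  calc t * ∑ i, Real.negMulLog (hρ.1.1.eigenvalues i)
        + (1 - t) * ∑ i, Real.negMulLog (hσ.1.1.eigenvalues i)
      ≤ t * ∑ i, Real.negMulLog ((Uᴴ * ρ * U) i i).re
        + (1 - t) * ∑ i, Real.negMulLog ((Uᴴ * σ * U) i i).re :=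
        add_le_add
          (mul_le_mul_of_nonneg_left (sum_negMulLog_eigenvalues_le_diag hρ.1 hU) h0)
          (mul_le_mul_of_nonneg_left (sum_negMulLog_eigenvalues_le_diag hσ.1 hU)
            (sub_nonneg.mpr h1))
    _ = ∑ i, (t * Real.negMulLog ((Uᴴ * ρ * U) i i).re
        + (1 - t) * Real.negMulLog ((Uᴴ * σ * U) i i).re) := by
        rw [Finset.mul_sum, Finset.mul_sum, Finset.sum_add_distrib]
    _ ≤ _ := Finset.sum_le_sum fun i _ => by
        rw [hdiag i]
        simpa only [smul_eq_mul] using Real.concaveOn_negMulLog.2 (hnonneg hρ i) (hnonneg hσ i) h0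
          (sub_nonneg.mpr h1) (by ring)

/-- The spectral decomposition of `t A`, written through unnormalized eigenvectors. -/
lemma smul_exists_columns {A : Matrix n n ℂ} (hA : A.PosSemidef) {t : ℝ} (ht : 0 ≤ t) :
    ∃ B : Matrix n n ℂ, t • A = B * Bᴴ ∧
      ∀ j, ((Bᴴ * B) j j).re = t * hA.1.eigenvalues j := by
  obtain ⟨U, hU, hU', hAU⟩ := exists_unitary_diagonalization hA.1
  have hsq : ∀ j, (Real.sqrt (t * hA.1.eigenvalues j) : ℂ) * Real.sqrt (t * hA.1.eigenvalues j)
      = t * hA.1.eigenvalues j := fun j => by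
    rw [← Complex.ofReal_mul, Real.mul_self_sqrt (mul_nonneg ht (hA.eigenvalues_nonneg j)),
      Complex.ofReal_mul]
  refine ⟨U * diagonal (fun j => (Real.sqrt (t * hA.1.eigenvalues j) : ℂ)), ?_, fun j => ?_⟩
  · rw [conjTranspose_mul, diagonal_conjTranspose, Matrix.mul_assoc, ← Matrix.mul_assoc (diagonal _),
      diagonal_mul_diagonal]
    conv_lhs => rw [hAU]
    rw [Matrix.mul_assoc, ← Matrix.mul_smul, ← Matrix.smul_mul]
    congr 2
    ext i j
    by_cases h : i = j
    · subst h; simp [hsq]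
    · simp [h]
  · rw [conjTranspose_mul, diagonal_conjTranspose, Matrix.mul_assoc, ← Matrix.mul_assoc Uᴴ, hU',
      Matrix.one_mul, diagonal_mul_diagonal]
    simp only [diagonal_apply_eq, Pi.star_apply, RCLike.star_def, Complex.conj_ofReal, hsq]
    simp

/-- The von Neumann entropy of a mixture exceeds the mixture of entropies by at most the entropy of
the weights. -/
lemma IsState.vnEnt_mix_le {ρ σ : Matrix n n ℂ} (hρ : IsState ρ) (hσ : IsState σ) {t : ℝ}
    (h0 : 0 ≤ t) (h1 : t ≤ 1) :
    vnEnt (t • ρ + (1 - t) • σ)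
      ≤ t * vnEnt ρ + (1 - t) * vnEnt σ + Real.binEntropy t := by
  have hA := hρ.mix hσ h0 h1
  rw [hA.vnEnt_eq, hρ.vnEnt_eq, hσ.vnEnt_eq]
  obtain ⟨B, hB, hB'⟩ := smul_exists_columns hρ.1 h0
  obtain ⟨C, hC, hC'⟩ := smul_exists_columns hσ.1 (sub_nonneg.mpr h1)
  have hsum : ∀ {τ : Matrix n n ℂ} (hτ : IsState τ) (s : ℝ),
      ∑ j, Real.negMulLog (s * hτ.1.1.eigenvalues j)
        = Real.negMulLog s + s * ∑ j, Real.negMulLog (hτ.1.1.eigenvalues j) := fun hτ s => by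
    simp_rw [Real.negMulLog_mul, Finset.sum_add_distrib, ← Finset.sum_mul, ← Finset.mul_sum,
      hτ.sum_eigenvalues, one_mul]
  refine (sum_negMulLog_eigenvalues_le_columns hA.1.1 (fromCols B C) ?_).trans (le_of_eq ?_)
  · rw [conjTranspose_fromCols_eq_fromRows_conjTranspose, fromCols_mul_fromRows, hB, hC]
  · rw [conjTranspose_fromCols_eq_fromRows_conjTranspose, fromRows_mul_fromCols,
      Fintype.sum_sum_type]
    simp only [fromBlocks_apply₁₁, fromBlocks_apply₂₂, hB', hC',
      Real.binEntropy_eq_negMulLog_add_negMulLog_one_sub]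
    rw [hsum hρ, hsum hσ]
    ring

end Entropy

section Marginal

variable {N : ℕ} {α : Fin N → Type*} [∀ i, Fintype (α i)] [∀ i, DecidableEq (α i)]

omit [∀ i, DecidableEq (α i)] in
lemma marg_eq_sum_submatrix (S : Finset (Fin N)) (ω : Matrix (∀ i, α i) (∀ i, α i) ℂ) :
    marg S ω = ∑ g : ∀ i : {x : Fin N // x ∉ S}, α i.1,
      ω.submatrix (fun p => (Equiv.piEquivPiSubtypeProd (· ∈ S) α).symm (p, g))
        (fun p => (Equiv.piEquivPiSubtypeProd (· ∈ S) α).symm (p, g)) := by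
  ext p q
  rw [Matrix.sum_apply]
  rfl

omit [∀ i, DecidableEq (α i)] in
lemma marg_mix (S : Finset (Fin N)) (ρ σ : Matrix (∀ i, α i) (∀ i, α i) ℂ) (s t : ℝ) :
    marg S (s • ρ + t • σ) = s • marg S ρ + t • marg S σ := by
  ext p q
  simp [marg, Finset.sum_add_distrib, Finset.mul_sum]

omit [∀ i, DecidableEq (α i)] in
lemma trace_marg (S : Finset (Fin N)) (ω : Matrix (∀ i, α i) (∀ i, α i) ℂ) :
    (marg S ω).trace = ω.trace := by
  rw [marg_eq_sum_submatrix, trace_sum]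
  simp only [Matrix.trace, diag_apply, submatrix_apply]
  rw [Finset.sum_comm, ← Fintype.sum_prod_type']
  exact (Equiv.piEquivPiSubtypeProd (· ∈ S) α).symm.sum_comp fun x => ω x x

omit [∀ i, DecidableEq (α i)] in
lemma IsState.marg (S : Finset (Fin N)) {ω : Matrix (∀ i, α i) (∀ i, α i) ℂ} (hω : IsState ω) :
    IsState (marg S ω) := by
  refine ⟨?_, (trace_marg S ω).trans hω.2⟩
  rw [marg_eq_sum_submatrix]
  exact posSemidef_sum _ fun g _ => hω.1.submatrix _

variable {K : Type*} [Fintype K] (c : K → ℝ) (X : K → Finset (Fin N))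

/-- A combination of marginal entropies is convex up to the entropy of the weights times the sum
of its positive coefficients. -/
lemma entCombo_mix_le {ρ σ : Matrix (∀ i, α i) (∀ i, α i) ℂ} (hρ : IsState ρ) (hσ : IsState σ)
    {t : ℝ} (h0 : 0 ≤ t) (h1 : t ≤ 1) :
    entCombo c X (t • ρ + (1 - t) • σ) ≤ t * entCombo c X ρ + (1 - t) * entCombo c X σ
      + Real.binEntropy t * ∑ k ∈ Finset.univ.filter (fun k => 0 < c k), c k := by
  rw [Finset.sum_filter, entCombo, entCombo, entCombo, Finset.mul_sum, Finset.mul_sum,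
    Finset.mul_sum, ← Finset.sum_add_distrib, ← Finset.sum_add_distrib]
  refine Finset.sum_le_sum fun k _ => ?_
  rw [marg_mix]
  split_ifs with hk
  · linarith [mul_le_mul_of_nonneg_left
      ((hρ.marg (X k)).vnEnt_mix_le (hσ.marg (X k)) h0 h1) hk.le]
  · linarith [mul_le_mul_of_nonpos_left
      ((hρ.marg (X k)).mix_le_vnEnt (hσ.marg (X k)) h0 h1) (not_lt.mp hk)]

lemma bddAbove_abs_entCombo_sub :
    BddAbove {x : ℝ | ∃ ρ τ : Matrix (∀ i, α i) (∀ i, α i) ℂ,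
      IsState ρ ∧ IsState τ ∧ x = |entCombo c X ρ - entCombo c X τ|} := by
  obtain ⟨C, hC⟩ : ∃ C : ℝ, ∀ ρ : Matrix (∀ i, α i) (∀ i, α i) ℂ, IsState ρ →
      |entCombo c X ρ| ≤ C :=
    ⟨∑ k, |c k| * Fintype.card (∀ i : {x : Fin N // x ∈ X k}, α i.1), fun ρ hρ =>
      (Finset.abs_sum_le_sum_abs _ _).trans <| Finset.sum_le_sum fun k _ => by
        rw [abs_mul]
        exact mul_le_mul_of_nonneg_left (hρ.marg (X k)).abs_vnEnt_le (abs_nonneg _)⟩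
  refine ⟨C + C, ?_⟩
  rintro x ⟨ρ, τ, hρ, hτ, rfl⟩
  exact (abs_sub _ _).trans (add_le_add (hC ρ hρ) (hC τ hτ))

end Marginal

section JordanDecomposition

variable {n : Type*} [Fintype n] [DecidableEq n]

lemma traceNorm_conj_diagonal {U : Matrix n n ℂ} (hU : Uᴴ * U = 1) (d : n → ℝ) :
    traceNorm (U * diagonal (fun i => (d i : ℂ)) * Uᴴ) = ∑ i, |d i| := by
  rw [traceNorm, sum_eigenvalues_conj_diagonal hU (fun i => d i * d i) _ _ Real.sqrt]
  · simp only [Real.sqrt_mul_self_eq_abs]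
  · simp only [conjTranspose_mul, conjTranspose_conjTranspose, diagonal_conjTranspose]
    rw [Matrix.mul_assoc, Matrix.mul_assoc, ← Matrix.mul_assoc Uᴴ, ← Matrix.mul_assoc Uᴴ, hU,
      Matrix.one_mul, ← Matrix.mul_assoc (diagonal _), diagonal_mul_diagonal, ← Matrix.mul_assoc]
    congr 3
    ext i
    simp

lemma trace_conj_diagonal {U : Matrix n n ℂ} (hU : Uᴴ * U = 1) (d : n → ℝ) :
    (U * diagonal (fun i => (d i : ℂ)) * Uᴴ).trace = ((∑ i, d i : ℝ) : ℂ) := by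
  rw [trace_mul_comm, ← Matrix.mul_assoc, hU, Matrix.one_mul, trace_diagonal]
  simp

lemma posSemidef_conj_diagonal (U : Matrix n n ℂ) {d : n → ℝ} (hd : ∀ i, 0 ≤ d i) :
    (U * diagonal (fun i => (d i : ℂ)) * Uᴴ).PosSemidef :=
  (PosSemidef.diagonal fun i => by simpa using hd i).mul_mul_conjTranspose_same U

/-- The difference of two states is `ε (τ - σ)` for states `τ`, `σ`, where `ε` is half its trace
norm. -/
lemma IsState.exists_jordan {ρ₁ ρ₂ : Matrix n n ℂ} (h1 : IsState ρ₁) (h2 : IsState ρ₂) :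
    ∃ τ σ : Matrix n n ℂ, IsState τ ∧ IsState σ ∧
      ρ₁ - ρ₂ = (traceNorm (ρ₁ - ρ₂) / 2) • τ - (traceNorm (ρ₁ - ρ₂) / 2) • σ := by
  obtain ⟨U, hU, hU', hD⟩ := exists_unitary_diagonalization (h1.1.1.sub h2.1.1)
  set d := (h1.1.1.sub h2.1.1).eigenvalues
  have hnorm : traceNorm (ρ₁ - ρ₂) = ∑ i, |d i| := by
    conv_lhs => rw [hD]
    exact traceNorm_conj_diagonal hU' d
  have hsum : ∑ i, d i = 0 := by
    have h := trace_conj_diagonal hU' d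
    rw [← hD, trace_sub, h1.2, h2.2, sub_self] at h
    exact_mod_cast h.symm
  set ε := traceNorm (ρ₁ - ρ₂) / 2 with hε
  have hε0 : 0 ≤ ε := by
    rw [hε, hnorm]; positivity
  rcases hε0.eq_or_lt with h | hpos
  · refine ⟨ρ₁, ρ₁, h1, h1, ?_⟩
    have hd : ∀ i, d i = 0 := fun i => by
      have h' : ∑ i, |d i| = 0 := by linarith
      exact abs_eq_zero.mp
        ((Finset.sum_eq_zero_iff_of_nonneg fun i _ => abs_nonneg (d i)).mp h' i (Finset.mem_univ i))
    rw [hD]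
    simp [hd]
  · have hstate : ∀ e : n → ℝ, (∀ i, 0 ≤ e i) → ∑ i, e i = ε →
        IsState (U * diagonal (fun i => ((ε⁻¹ * e i : ℝ) : ℂ)) * Uᴴ) := fun e he hs =>
      ⟨posSemidef_conj_diagonal U fun i => mul_nonneg (inv_nonneg.mpr hε0) (he i), by
        rw [trace_conj_diagonal hU', ← Finset.mul_sum, hs, inv_mul_cancel₀ hpos.ne']
        simp⟩
    have hscale : ∀ e : n → ℝ, ε • (U * diagonal (fun i => ((ε⁻¹ * e i : ℝ) : ℂ)) * Uᴴ)
        = U * diagonal (fun i => (e i : ℂ)) * Uᴴ := fun e => by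
      rw [← Matrix.smul_mul, ← Matrix.mul_smul, ← diagonal_smul]
      congr 3
      ext i
      simp [hpos.ne']
    refine ⟨_, _, hstate (fun i => (|d i| + d i) / 2) (fun i => by linarith [neg_abs_le (d i)]) ?_,
      hstate (fun i => (|d i| - d i) / 2) (fun i => by linarith [le_abs_self (d i)]) ?_, ?_⟩
    · rw [← Finset.sum_div, Finset.sum_add_distrib, hsum, hε, hnorm, add_zero]
    · rw [← Finset.sum_div, Finset.sum_sub_distrib, hsum, hε, hnorm, sub_zero]
    · rw [hscale, hscale, ← Matrix.sub_mul, ← Matrix.mul_sub, diagonal_sub, hD]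
      congr 3
      ext i
      push_cast
      ring

end JordanDecomposition

/-- Continuity bound for a concave linear combination of marginal entropies:
`|F(ω¹) − F(ω²)| ≤ ε·sup|F(ω)−F(ω')| + (1+ε)h₂(ε/(1+ε))·Σ_{c_k>0} c_k`
whenever `ε = ½‖ω¹−ω²‖₁ < 1`. -/
theorem entCombo_continuity_bound {N : ℕ} {α : Fin N → Type*}
    [∀ i, Fintype (α i)] [∀ i, DecidableEq (α i)]
    {K : Type*} [Fintype K] (c : K → ℝ) (X : K → Finset (Fin N))
    (hconc : ∀ ρ τ : Matrix (∀ i, α i) (∀ i, α i) ℂ, IsState ρ → IsState τ →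
      ∀ t : ℝ, 0 ≤ t → t ≤ 1 →
        t * entCombo c X ρ + (1 - t) * entCombo c X τ
          ≤ entCombo c X (t • ρ + (1 - t) • τ))
    (ω₁ ω₂ : Matrix (∀ i, α i) (∀ i, α i) ℂ) (h1 : IsState ω₁) (h2 : IsState ω₂)
    (hε : traceNorm (ω₁ - ω₂) / 2 < 1) :
    |entCombo c X ω₁ - entCombo c X ω₂|
      ≤ (traceNorm (ω₁ - ω₂) / 2) *
          sSup {x : ℝ | ∃ ρ τ : Matrix (∀ i, α i) (∀ i, α i) ℂ, IsState ρ ∧ IsState τ ∧ x = |entCombo c X ρ - entCombo c X τ|}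
        + (1 + traceNorm (ω₁ - ω₂) / 2) *
            Real.binEntropy ((traceNorm (ω₁ - ω₂) / 2) / (1 + traceNorm (ω₁ - ω₂) / 2)) *
            ∑ k ∈ Finset.univ.filter (fun k => 0 < c k), c k := by
  obtain ⟨τ, σ, hτ, hσ, hD⟩ := h1.exists_jordan h2
  set ε := traceNorm (ω₁ - ω₂) / 2
  set M := sSup {x : ℝ | ∃ ρ τ : Matrix (∀ i, α i) (∀ i, α i) ℂ,
    IsState ρ ∧ IsState τ ∧ x = |entCombo c X ρ - entCombo c X τ|}
  have hε0 : 0 ≤ ε := div_nonneg (Finset.sum_nonneg fun i _ => Real.sqrt_nonneg _) zero_le_two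
  have hpos : 0 < 1 + ε := by linarith
  have ht0 : 0 ≤ 1 / (1 + ε) := by positivity
  have ht1 : 1 / (1 + ε) ≤ 1 := (div_le_one hpos).mpr (by linarith)
  have hs : 1 - 1 / (1 + ε) = ε / (1 + ε) := by field_simp; ring
  have hent : Real.binEntropy (1 / (1 + ε)) = Real.binEntropy (ε / (1 + ε)) := by
    rw [← hs, Real.binEntropy_one_sub]
  have hmix : (1 / (1 + ε)) • ω₁ + (1 - 1 / (1 + ε)) • σ
      = (1 / (1 + ε)) • ω₂ + (1 - 1 / (1 + ε)) • τ := by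
    have h : ω₁ + ε • σ = ω₂ + ε • τ := by
      rw [← sub_eq_zero, show ω₁ + ε • σ - (ω₂ + ε • τ) = ω₁ - ω₂ - (ε • τ - ε • σ) by abel, hD,
        sub_self]
    rw [hs, div_eq_mul_inv ε, mul_comm ε, ← one_div, mul_smul, mul_smul, ← smul_add, h, smul_add]
  have hbound : ∀ {ρ ρ' : Matrix (∀ i, α i) (∀ i, α i) ℂ}, IsState ρ → IsState ρ' →
      entCombo c X ρ - entCombo c X ρ' ≤ M := fun hρ hρ' =>
    (le_abs_self _).trans (le_csSup (bddAbove_abs_entCombo_sub c X) ⟨_, _, hρ, hρ', rfl⟩)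
  have key : ∀ {ρ ρ' η η' : Matrix (∀ i, α i) (∀ i, α i) ℂ}, IsState ρ → IsState ρ' →
      IsState η → IsState η' →
      (1 / (1 + ε)) • ρ + (1 - 1 / (1 + ε)) • η = (1 / (1 + ε)) • ρ' + (1 - 1 / (1 + ε)) • η' →
      entCombo c X ρ - entCombo c X ρ' ≤ ε * M + (1 + ε) * Real.binEntropy (ε / (1 + ε)) *
        ∑ k ∈ Finset.univ.filter (fun k => 0 < c k), c k := by
    intro ρ ρ' η η' hρ hρ' hη hη' h
    have hlow := hconc ρ η hρ hη _ ht0 ht1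
    have hup := entCombo_mix_le c X hρ' hη' ht0 ht1
    rw [h] at hlow
    rw [hent] at hup
    have hle := mul_le_mul_of_nonneg_left (hlow.trans hup) hpos.le
    rw [hs] at hle
    field_simp at hle
    linarith [mul_le_mul_of_nonneg_left (hbound hη' hη) hε0]
  rw [abs_le']
  exact ⟨key h1 h2 hσ hτ hmix, by rw [neg_sub]; exact key h2 h1 hτ hσ hmix.symm⟩
end
end

section
/- For any two states ω¹, ω² of a finite-dimensional bipartite system AB with ε = ½‖ω¹−ω²‖₁ < 1, the conditional entropy H(A|B)_ω = H(ω_AB) − H(ω_B) satisfies |H(A|B)_{ω¹} − H(A|B)_{ω²}| ≤ 2ε log(dim H_A) + (1+ε)·h₂(ε/(1+ε)). -/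
open Matrix
open scoped ComplexOrder

noncomputable section

/-- Partial trace over the second tensor factor. -/
def mFst {a b : Type*} [Fintype b] (ω : Matrix (a × b) (a × b) ℂ) : Matrix a a ℂ :=
  Matrix.of fun i j => ∑ k : b, ω (i, k) (j, k)

/-- Partial trace over the first tensor factor. -/
def mSnd {a b : Type*} [Fintype a] (ω : Matrix (a × b) (a × b) ℂ) : Matrix b b ℂ :=
  Matrix.of fun i j => ∑ k : a, ω (k, i) (k, j)

/-- Conditional entropy `H(A|B)_ω = H(ω_AB) − H(ω_B)`. -/
def condEnt {a b : Type*} [Fintype a] [DecidableEq a] [Fintype b] [DecidableEq b]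
    (ω : Matrix (a × b) (a × b) ℂ) : ℝ :=
  vnEnt ω - vnEnt (mSnd ω)

section Overlap

variable {n : Type*} [Fintype n] [DecidableEq n]

lemma trace_diagonal_mul_mul_conjTranspose (d : n → ℂ) (W Z : Matrix n n ℂ) :
    (diagonal d * W * Zᴴ).trace = ∑ i, ∑ j, d i * (W i j * star (Z i j)) := by
  simp only [Matrix.mul_assoc, trace, diag_apply, diagonal_mul]
  simp [mul_apply, Finset.mul_sum]

lemma trace_diagonal_mul_conjTranspose_mul (d : n → ℂ) (W Z : Matrix n n ℂ) :
    (diagonal d * (Zᴴ * W)).trace = ∑ i, ∑ j, d j * (W i j * star (Z i j)) := by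
  rw [Finset.sum_comm]
  simp only [trace, diag_apply, diagonal_mul]
  simp [mul_apply, Finset.mul_sum, mul_comm]

lemma trace_conj_diagonal_mul_conj_diagonal (U V : Matrix n n ℂ) (f g : n → ℝ) :
    ((U * diagonal (fun i => (f i : ℂ)) * Uᴴ) * (V * diagonal (fun i => (g i : ℂ)) * Vᴴ)).trace.re
      = ∑ i, ∑ j, Complex.normSq ((Uᴴ * V) i j) * (f i * g j) := by
  have h : ((U * diagonal (fun i => (f i : ℂ)) * Uᴴ) *
      (V * diagonal (fun i => (g i : ℂ)) * Vᴴ)).trace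
      = (diagonal (fun i => (f i : ℂ)) * (Uᴴ * V * diagonal (fun i => (g i : ℂ))) *
        (Uᴴ * V)ᴴ).trace := by
    rw [conjTranspose_mul, conjTranspose_conjTranspose]
    simp only [Matrix.mul_assoc]
    rw [trace_mul_comm U]
    simp only [Matrix.mul_assoc]
  rw [h, trace_diagonal_mul_mul_conjTranspose, Complex.re_sum]
  refine Finset.sum_congr rfl fun i _ => ?_
  rw [Complex.re_sum]
  refine Finset.sum_congr rfl fun j _ => ?_
  rw [mul_diagonal, mul_right_comm, Complex.star_def, Complex.mul_conj, ← Complex.ofReal_mul,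
    ← Complex.ofReal_mul, Complex.ofReal_re]
  ring

/-- The quadratic form whose supremum over `Y` is
`⟪A - B, (L_A + t R_B)⁻¹ (A - B)⟫`, where `L` and `R` denote left and right multiplication. -/
def resolventForm (t : ℝ) (A B Y : Matrix n n ℂ) : ℝ :=
  2 * ((A - B) * Yᴴ).trace.re - (A * (Y * Yᴴ)).trace.re - t * (B * (Yᴴ * Y)).trace.re

omit [DecidableEq n] in
lemma resolventForm_add (t : ℝ) (A₁ A₂ B₁ B₂ Y : Matrix n n ℂ) :
    resolventForm t (A₁ + A₂) (B₁ + B₂) Y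
      = resolventForm t A₁ B₁ Y + resolventForm t A₂ B₂ Y := by
  simp only [resolventForm, Matrix.add_mul, Matrix.sub_mul, trace_add, trace_sub, Complex.add_re,
    Complex.sub_re]
  ring

lemma resolventForm_conj {U V : Matrix n n ℂ} (hU : Uᴴ * U = 1) (hV : Vᴴ * V = 1)
    (a b : n → ℝ) (t : ℝ) (Z : Matrix n n ℂ) :
    resolventForm t (U * diagonal (fun i => (a i : ℂ)) * Uᴴ)
        (V * diagonal (fun i => (b i : ℂ)) * Vᴴ) (U * Z * Vᴴ)
      = ∑ i, ∑ j, (2 * (a i - b j) * ((Uᴴ * V) i j * star (Z i j)).re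
          - (a i + t * b j) * Complex.normSq (Z i j)) := by
  have hU' (M : Matrix n n ℂ) : Uᴴ * (U * M) = M := by rw [← Matrix.mul_assoc, hU, Matrix.one_mul]
  have hV' (M : Matrix n n ℂ) : Vᴴ * (V * M) = M := by rw [← Matrix.mul_assoc, hV, Matrix.one_mul]
  have h1 : ((U * diagonal (fun i => (a i : ℂ)) * Uᴴ - V * diagonal (fun i => (b i : ℂ)) * Vᴴ)
      * (U * Z * Vᴴ)ᴴ).trace
      = (diagonal (fun i => (a i : ℂ)) * (Uᴴ * V) * Zᴴ).trace
        - (diagonal (fun i => (b i : ℂ)) * (Zᴴ * (Uᴴ * V))).trace := by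
    simp only [conjTranspose_mul, conjTranspose_conjTranspose, Matrix.sub_mul, trace_sub,
      Matrix.mul_assoc, hV']
    rw [trace_mul_comm U, trace_mul_comm V]
    simp only [Matrix.mul_assoc, hU, Matrix.mul_one]
  have h2 : ((U * diagonal (fun i => (a i : ℂ)) * Uᴴ) * ((U * Z * Vᴴ) * (U * Z * Vᴴ)ᴴ)).trace
      = (diagonal (fun i => (a i : ℂ)) * Z * Zᴴ).trace := by
    simp only [conjTranspose_mul, conjTranspose_conjTranspose, Matrix.mul_assoc, hV', hU']
    rw [trace_mul_comm U]
    simp only [Matrix.mul_assoc, hU, Matrix.mul_one]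
  have h3 : ((V * diagonal (fun i => (b i : ℂ)) * Vᴴ) * ((U * Z * Vᴴ)ᴴ * (U * Z * Vᴴ))).trace
      = (diagonal (fun i => (b i : ℂ)) * (Zᴴ * Z)).trace := by
    simp only [conjTranspose_mul, conjTranspose_conjTranspose, Matrix.mul_assoc, hV', hU']
    rw [trace_mul_comm V]
    simp only [Matrix.mul_assoc, hV, Matrix.mul_one]
  rw [resolventForm, h1, h2, h3, trace_diagonal_mul_mul_conjTranspose,
    trace_diagonal_mul_mul_conjTranspose, trace_diagonal_mul_conjTranspose_mul,
    trace_diagonal_mul_conjTranspose_mul]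
  simp only [Complex.sub_re, Complex.re_sum, Finset.mul_sum, ← Finset.sum_sub_distrib]
  refine Finset.sum_congr rfl fun i _ => Finset.sum_congr rfl fun j _ => ?_
  simp only [Complex.star_def, Complex.mul_conj, Complex.re_ofReal_mul, Complex.ofReal_re]
  ring

lemma two_mul_re_sub_le {x c : ℝ} (hc : 0 < c) (w z : ℂ) :
    2 * x * (w * star z).re - c * Complex.normSq z ≤ Complex.normSq w * (x ^ 2 / c) := by
  have key : Complex.normSq w * (x ^ 2 / c) - (2 * x * (w * star z).re - c * Complex.normSq z)
      = ((x * w.re - c * z.re) ^ 2 + (x * w.im - c * z.im) ^ 2) / c := by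
    simp only [Complex.star_def, Complex.mul_re, Complex.conj_re, Complex.conj_im,
      Complex.normSq_apply]
    field_simp
    ring
  have : 0 ≤ ((x * w.re - c * z.re) ^ 2 + (x * w.im - c * z.im) ^ 2) / c := by positivity
  linarith

lemma two_mul_re_sub_eq {x c : ℝ} (hc : 0 < c) (w : ℂ) :
    2 * x * (w * star (((x / c : ℝ) : ℂ) * w)).re - c * Complex.normSq (((x / c : ℝ) : ℂ) * w)
      = Complex.normSq w * (x ^ 2 / c) := by
  simp only [Complex.star_def, map_mul, Complex.conj_ofReal,
    Complex.mul_re, Complex.conj_re, Complex.conj_im, Complex.normSq_apply, Complex.ofReal_re,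
    Complex.ofReal_im, Complex.mul_im]
  field_simp
  ring

end Overlap

section RelativeEntropy

variable {n : Type*} [Fintype n] [DecidableEq n]

/-- The squared overlaps of the eigenbases of two Hermitian matrices. -/
def overlap {A B : Matrix n n ℂ} (hA : A.IsHermitian) (hB : B.IsHermitian) (i j : n) : ℝ :=
  Complex.normSq
    (((hA.eigenvectorUnitary : Matrix n n ℂ)ᴴ * (hB.eigenvectorUnitary : Matrix n n ℂ)) i j)

lemma overlap_nonneg {A B : Matrix n n ℂ} (hA : A.IsHermitian) (hB : B.IsHermitian) (i j : n) :
    0 ≤ overlap hA hB i j :=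
  Complex.normSq_nonneg _

lemma cfc_eq_conj_diagonal {A : Matrix n n ℂ} (hA : A.IsHermitian) (f : ℝ → ℝ) :
    cfc f A = (hA.eigenvectorUnitary : Matrix n n ℂ) *
      diagonal (fun i => (f (hA.eigenvalues i) : ℂ)) *
      (hA.eigenvectorUnitary : Matrix n n ℂ)ᴴ := by
  rw [hA.cfc_eq, IsHermitian.cfc, Unitary.conjStarAlgAut_apply]
  rfl

lemma eq_conj_diagonal {A : Matrix n n ℂ} (hA : A.IsHermitian) :
    A = (hA.eigenvectorUnitary : Matrix n n ℂ) *
      diagonal (fun i => (hA.eigenvalues i : ℂ)) *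
      (hA.eigenvectorUnitary : Matrix n n ℂ)ᴴ := by
  conv_lhs => rw [hA.spectral_theorem, Unitary.conjStarAlgAut_apply]
  rfl

lemma eigenvectorUnitary_conjTranspose_mul_self {A : Matrix n n ℂ} (hA : A.IsHermitian) :
    (hA.eigenvectorUnitary : Matrix n n ℂ)ᴴ * (hA.eigenvectorUnitary : Matrix n n ℂ) = 1 :=
  Unitary.coe_star_mul_self hA.eigenvectorUnitary

lemma eigenvectorUnitary_mul_conjTranspose_self {A : Matrix n n ℂ} (hA : A.IsHermitian) :
    (hA.eigenvectorUnitary : Matrix n n ℂ) * (hA.eigenvectorUnitary : Matrix n n ℂ)ᴴ = 1 :=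
  Unitary.coe_mul_star_self hA.eigenvectorUnitary

lemma re_trace_cfc_mul_cfc {A B : Matrix n n ℂ} (hA : A.IsHermitian) (hB : B.IsHermitian)
    (f g : ℝ → ℝ) :
    (cfc f A * cfc g B).trace.re
      = ∑ i, ∑ j, overlap hA hB i j * (f (hA.eigenvalues i) * g (hB.eigenvalues j)) := by
  rw [cfc_eq_conj_diagonal hA, cfc_eq_conj_diagonal hB, trace_conj_diagonal_mul_conj_diagonal]
  rfl

lemma re_trace_cfc {A : Matrix n n ℂ} (hA : A.IsHermitian) (f : ℝ → ℝ) :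
    (cfc f A).trace.re = ∑ i, f (hA.eigenvalues i) := by
  rw [cfc_eq_conj_diagonal hA, trace_mul_comm, ← Matrix.mul_assoc,
    eigenvectorUnitary_conjTranspose_mul_self, Matrix.one_mul, trace_diagonal, Complex.re_sum]
  simp

/-- Umegaki's relative entropy `Tr A (log A - log B)`. -/
def relEnt (A B : Matrix n n ℂ) : ℝ :=
  (cfc (fun x => x * Real.log x) A).trace.re - (A * cfc Real.log B).trace.re

lemma relEnt_sub_trace_add_trace {A B : Matrix n n ℂ} (hA : A.IsHermitian) (hB : B.IsHermitian) :
    relEnt A B - A.trace.re + B.trace.re = ∑ i, ∑ j, overlap hA hB i j *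
      (hA.eigenvalues i * Real.log (hA.eigenvalues i)
        - hA.eigenvalues i * Real.log (hB.eigenvalues j)
        - hA.eigenvalues i + hB.eigenvalues j) := by
  have hA' : IsSelfAdjoint A := hA
  have hB' : IsSelfAdjoint B := hB
  have e1 := re_trace_cfc_mul_cfc hA hB (fun x => x * Real.log x) (fun _ => 1)
  have e2 := re_trace_cfc_mul_cfc hA hB (fun x => x) Real.log
  have e3 := re_trace_cfc_mul_cfc hA hB (fun x => x) (fun _ => 1)
  have e4 := re_trace_cfc_mul_cfc hA hB (fun _ => 1) (fun x => x)
  rw [cfc_const_one ℝ B, Matrix.mul_one] at e1 e3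
  rw [cfc_const_one ℝ A, Matrix.one_mul] at e4
  rw [cfc_id' ℝ A] at e2 e3
  rw [cfc_id' ℝ B] at e4
  rw [relEnt, e1, e2, e3, e4]
  simp only [← Finset.sum_sub_distrib, ← Finset.sum_add_distrib]
  refine Finset.sum_congr rfl fun i _ => Finset.sum_congr rfl fun j _ => ?_
  ring

/-- `⟪A - B, (L_A + t R_B)⁻¹ (A - B)⟫`, written in the eigenbases of `A` and `B`. -/
def resolventQuad {A B : Matrix n n ℂ} (hA : A.IsHermitian) (hB : B.IsHermitian) (t : ℝ) : ℝ :=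
  ∑ i, ∑ j, overlap hA hB i j *
    ((hA.eigenvalues i - hB.eigenvalues j) ^ 2 / (hA.eigenvalues i + t * hB.eigenvalues j))

lemma resolventForm_le_resolventQuad {A B : Matrix n n ℂ} (hA : A.PosDef) (hB : B.PosDef)
    {t : ℝ} (ht : 0 ≤ t) (Y : Matrix n n ℂ) :
    resolventForm t A B Y ≤ resolventQuad hA.1 hB.1 t := by
  have hY : Y = (hA.1.eigenvectorUnitary : Matrix n n ℂ) *
      ((hA.1.eigenvectorUnitary : Matrix n n ℂ)ᴴ * Y * (hB.1.eigenvectorUnitary : Matrix n n ℂ)) *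
      (hB.1.eigenvectorUnitary : Matrix n n ℂ)ᴴ := by
    simp only [Matrix.mul_assoc, eigenvectorUnitary_mul_conjTranspose_self, Matrix.mul_one]
    rw [← Matrix.mul_assoc, eigenvectorUnitary_mul_conjTranspose_self, Matrix.one_mul]
  have h := resolventForm_conj (eigenvectorUnitary_conjTranspose_mul_self hA.1)
    (eigenvectorUnitary_conjTranspose_mul_self hB.1) hA.1.eigenvalues hB.1.eigenvalues t
    ((hA.1.eigenvectorUnitary : Matrix n n ℂ)ᴴ * Y * (hB.1.eigenvectorUnitary : Matrix n n ℂ))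
  rw [← hY, ← eq_conj_diagonal, ← eq_conj_diagonal] at h
  rw [h]
  refine Finset.sum_le_sum fun i _ => Finset.sum_le_sum fun j _ => two_mul_re_sub_le ?_ _ _
  have := hA.eigenvalues_pos i
  have := hB.eigenvalues_pos j
  positivity

lemma exists_resolventForm_eq {A B : Matrix n n ℂ} (hA : A.PosDef) (hB : B.PosDef)
    {t : ℝ} (ht : 0 ≤ t) : ∃ Y, resolventForm t A B Y = resolventQuad hA.1 hB.1 t := by
  have h := resolventForm_conj (eigenvectorUnitary_conjTranspose_mul_self hA.1)
    (eigenvectorUnitary_conjTranspose_mul_self hB.1) hA.1.eigenvalues hB.1.eigenvalues t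
    (Matrix.of fun i j =>
      (((hA.1.eigenvalues i - hB.1.eigenvalues j) /
        (hA.1.eigenvalues i + t * hB.1.eigenvalues j) : ℝ) : ℂ) *
      ((hA.1.eigenvectorUnitary : Matrix n n ℂ)ᴴ * (hB.1.eigenvectorUnitary : Matrix n n ℂ)) i j)
  rw [← eq_conj_diagonal, ← eq_conj_diagonal] at h
  refine ⟨_, h.trans ?_⟩
  refine Finset.sum_congr rfl fun i _ => Finset.sum_congr rfl fun j _ => two_mul_re_sub_eq ?_ _
  have := hA.eigenvalues_pos i
  have := hB.eigenvalues_pos j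
  positivity

lemma resolventQuad_add_le {A₁ A₂ B₁ B₂ : Matrix n n ℂ} (hA₁ : A₁.PosDef) (hA₂ : A₂.PosDef)
    (hB₁ : B₁.PosDef) (hB₂ : B₂.PosDef) {t : ℝ} (ht : 0 ≤ t) :
    resolventQuad (hA₁.add hA₂).1 (hB₁.add hB₂).1 t
      ≤ resolventQuad hA₁.1 hB₁.1 t + resolventQuad hA₂.1 hB₂.1 t := by
  obtain ⟨Y, hY⟩ := exists_resolventForm_eq (hA₁.add hA₂) (hB₁.add hB₂) ht
  rw [← hY, resolventForm_add]
  exact add_le_add (resolventForm_le_resolventQuad hA₁ hB₁ ht Y)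
    (resolventForm_le_resolventQuad hA₂ hB₂ ht Y)

/-- An antiderivative of `t ↦ t / (1 + t) ^ 2 * ((a - b) ^ 2 / (a + t * b))`. -/
def klPrimitive (a b t : ℝ) : ℝ :=
  a * (Real.log (1 + t) - Real.log (a + t * b)) + (a - b) / (1 + t)

lemma hasDerivAt_klPrimitive {a b t : ℝ} (ha : 0 < a) (hb : 0 < b) (ht : 0 ≤ t) :
    HasDerivAt (klPrimitive a b) (t / (1 + t) ^ 2 * ((a - b) ^ 2 / (a + t * b))) t := by
  have h1 : HasDerivAt (fun s : ℝ => 1 + s) 1 t := (hasDerivAt_id t).const_add 1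
  have h2 : HasDerivAt (fun s : ℝ => a + s * b) b t := by
    simpa using ((hasDerivAt_id t).mul_const b).const_add a
  have p1 : 1 + t ≠ 0 := by positivity
  have p2 : a + t * b ≠ 0 := by positivity
  have := (((h1.log p1).sub (h2.log p2)).const_mul a).add ((h1.inv p1).const_mul (a - b))
  refine (this.congr_deriv ?_).congr_of_eventuallyEq (.of_forall fun s => ?_)
  · field_simp
    ring
  · simp [klPrimitive, div_eq_mul_inv]

lemma tendsto_klPrimitive {a b : ℝ} (ha : 0 < a) (hb : 0 < b) :
    Filter.Tendsto (klPrimitive a b) Filter.atTop (nhds (-(a * Real.log b))) := by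
  have h0 : Filter.Tendsto (fun t : ℝ => 1 + t) Filter.atTop Filter.atTop :=
    Filter.tendsto_atTop_add_const_left _ _ Filter.tendsto_id
  have h1 : Filter.Tendsto (fun t : ℝ => (a - b) / (1 + t)) Filter.atTop (nhds 0) :=
    h0.const_div_atTop (a - b)
  have h2 : Filter.Tendsto (fun t : ℝ => b + (a - b) / (1 + t)) Filter.atTop (nhds b) := by
    simpa using h1.const_add b
  have h3 := (((h2.log hb.ne').const_mul (-a))).add h1
  rw [add_zero, neg_mul] at h3
  refine h3.congr' ?_
  filter_upwards [Filter.eventually_ge_atTop 0] with t ht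
  have p1 : 0 < 1 + t := by positivity
  have p2 : 0 < a + t * b := by positivity
  have : b + (a - b) / (1 + t) = (a + t * b) / (1 + t) := by
    field_simp
    ring
  rw [this, Real.log_div p2.ne' p1.ne', klPrimitive]
  ring

/-- The primitive of the resolvent integrand which computes the relative entropy. -/
def relEntPrimitive {A B : Matrix n n ℂ} (hA : A.IsHermitian) (hB : B.IsHermitian) (t : ℝ) : ℝ :=
  ∑ i, ∑ j, overlap hA hB i j * klPrimitive (hA.eigenvalues i) (hB.eigenvalues j) t

lemma hasDerivAt_relEntPrimitive {A B : Matrix n n ℂ} (hA : A.PosDef) (hB : B.PosDef) {t : ℝ}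
    (ht : 0 ≤ t) :
    HasDerivAt (relEntPrimitive hA.1 hB.1) (t / (1 + t) ^ 2 * resolventQuad hA.1 hB.1 t) t := by
  have := HasDerivAt.fun_sum (u := Finset.univ) fun i _ =>
    HasDerivAt.fun_sum (u := Finset.univ) fun j _ =>
      (hasDerivAt_klPrimitive (hA.eigenvalues_pos i) (hB.eigenvalues_pos j) ht).const_mul
        (overlap hA.1 hB.1 i j)
  refine this.congr_deriv ?_
  simp only [resolventQuad, Finset.mul_sum]
  refine Finset.sum_congr rfl fun i _ => Finset.sum_congr rfl fun j _ => ?_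
  ring

lemma tendsto_relEntPrimitive {A B : Matrix n n ℂ} (hA : A.PosDef) (hB : B.PosDef) :
    Filter.Tendsto (fun t => relEntPrimitive hA.1 hB.1 t - relEntPrimitive hA.1 hB.1 0)
      Filter.atTop (nhds (relEnt A B - A.trace.re + B.trace.re)) := by
  rw [relEnt_sub_trace_add_trace hA.1 hB.1]
  simp only [relEntPrimitive, ← Finset.sum_sub_distrib, ← mul_sub]
  refine tendsto_finsetSum _ fun i _ => tendsto_finsetSum _ fun j _ => Filter.Tendsto.const_mul _ ?_
  have h := (tendsto_klPrimitive (hA.eigenvalues_pos i) (hB.eigenvalues_pos j)).sub_const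
    (klPrimitive (hA.1.eigenvalues i) (hB.1.eigenvalues j) 0)
  convert h using 2
  simp only [klPrimitive, add_zero, zero_mul, Real.log_one, div_one]
  ring

/-- Klein's inequality. -/
lemma trace_sub_trace_le_relEnt {A B : Matrix n n ℂ} (hA : A.PosDef) (hB : B.PosDef) :
    A.trace.re - B.trace.re ≤ relEnt A B := by
  have h : 0 ≤ relEnt A B - A.trace.re + B.trace.re := by
    rw [relEnt_sub_trace_add_trace hA.1 hB.1]
    refine Finset.sum_nonneg fun i _ => Finset.sum_nonneg fun j _ =>
      mul_nonneg (overlap_nonneg _ _ _ _) ?_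
    have ha := hA.eigenvalues_pos i
    have hb := hB.eigenvalues_pos j
    have hl := Real.log_le_sub_one_of_pos (div_pos hb ha)
    rw [Real.log_div hb.ne' ha.ne'] at hl
    have := mul_le_mul_of_nonneg_left hl ha.le
    rw [mul_sub_one, mul_div_cancel₀ _ ha.ne'] at this
    linarith
  linarith

/-- Joint subadditivity (equivalently, joint convexity) of the relative entropy. -/
lemma relEnt_add_le {A₁ A₂ B₁ B₂ : Matrix n n ℂ} (hA₁ : A₁.PosDef) (hA₂ : A₂.PosDef)
    (hB₁ : B₁.PosDef) (hB₂ : B₂.PosDef) :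
    relEnt (A₁ + A₂) (B₁ + B₂) ≤ relEnt A₁ B₁ + relEnt A₂ B₂ := by
  have hd {t : ℝ} (ht : 0 ≤ t) := ((hasDerivAt_relEntPrimitive hA₁ hB₁ ht).fun_add
    (hasDerivAt_relEntPrimitive hA₂ hB₂ ht)).fun_sub
      (hasDerivAt_relEntPrimitive (hA₁.add hA₂) (hB₁.add hB₂) ht)
  have hmono := monotoneOn_of_hasDerivWithinAt_nonneg (convex_Ici (0 : ℝ))
    (fun t ht => (hd ht).continuousAt.continuousWithinAt)
    (fun t ht => (hd (interior_subset ht)).hasDerivWithinAt)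
    (fun t ht => by
      have ht : 0 ≤ t := interior_subset ht
      have := resolventQuad_add_le hA₁ hA₂ hB₁ hB₂ ht
      rw [← mul_add, ← mul_sub]
      exact mul_nonneg (by positivity) (by linarith))
  have hlim := ((tendsto_relEntPrimitive hA₁ hB₁).add (tendsto_relEntPrimitive hA₂ hB₂)).sub
      (tendsto_relEntPrimitive (hA₁.add hA₂) (hB₁.add hB₂))
  have h0 := ge_of_tendsto (b := 0) hlim (by
    filter_upwards [Filter.eventually_ge_atTop 0] with t ht
    have := hmono Set.self_mem_Ici ht ht
    simp only at this
    linarith)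
  simp only [trace_add, Complex.add_re] at h0
  linarith

end RelativeEntropy

section Entropy

open scoped MatrixOrder Matrix.Norms.L2Operator

variable {n : Type*} [Fintype n] [DecidableEq n]

lemma continuousOn_real_spectrum (A : Matrix n n ℂ) (f : ℝ → ℝ) :
    ContinuousOn f (spectrum ℝ A) :=
  A.finite_real_spectrum.continuousOn f

lemma re_trace_mul_nonneg {A B : Matrix n n ℂ} (hA : A.PosSemidef) (hB : B.PosSemidef) :
    0 ≤ (A * B).trace.re := by
  obtain ⟨C, rfl⟩ := CStarAlgebra.nonneg_iff_eq_star_mul_self.mp hA.nonneg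
  rw [Matrix.mul_assoc, trace_mul_comm]
  exact (Complex.le_def.mp (hB.mul_mul_conjTranspose_same C).trace_nonneg).1

lemma re_trace_mul_log_le {A X Y : Matrix n n ℂ} (hA : A.PosSemidef) (hX : X.PosDef)
    (hXY : X ≤ Y) : (A * cfc Real.log X).trace.re ≤ (A * cfc Real.log Y).trace.re := by
  have h : (cfc Real.log Y - cfc Real.log X).PosSemidef :=
    CFC.log_le_log hXY hX.isStrictlyPositive
  have := re_trace_mul_nonneg hA h
  rw [Matrix.mul_sub, trace_sub, Complex.sub_re] at this
  linarith

lemma mul_cfc_log {A : Matrix n n ℂ} (hA : A.IsHermitian) :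
    A * cfc Real.log A = cfc (fun x => x * Real.log x) A := by
  have hA' : IsSelfAdjoint A := hA
  rw [cfc_mul (fun x => x) Real.log A (continuousOn_real_spectrum A _)
    (continuousOn_real_spectrum A _), cfc_id' ℝ A]

lemma relEnt_nonpos {A B : Matrix n n ℂ} (hA : A.PosDef) (hAB : A ≤ B) : relEnt A B ≤ 0 := by
  rw [relEnt, ← mul_cfc_log hA.1]
  have := re_trace_mul_log_le hA.posSemidef hA hAB
  linarith

lemma relEnt_smul {A B : Matrix n n ℂ} (hB : B.PosDef) {c : ℝ} (hc : 0 < c) :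
    relEnt A (c • B) = relEnt A B - Real.log c * A.trace.re := by
  have h : cfc Real.log (c • B) = algebraMap ℝ _ (Real.log c) + cfc Real.log B :=
    CFC.log_smul' B hc hB.isStrictlyPositive
  rw [relEnt, relEnt, h, Matrix.mul_add, trace_add, Complex.add_re, Algebra.algebraMap_eq_smul_one,
    Matrix.mul_smul, Matrix.mul_one, trace_smul, Complex.smul_re, smul_eq_mul]
  ring

/-- The von Neumann entropy `-Tr A log A`, without the normalization by the trace. -/
def entropy (A : Matrix n n ℂ) : ℝ := (cfc Real.negMulLog A).trace.re

lemma re_trace_cfc_mul_log {A : Matrix n n ℂ} (hA : A.IsHermitian) :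
    (cfc (fun x => x * Real.log x) A).trace.re = -entropy A := by
  rw [entropy, re_trace_cfc hA, re_trace_cfc hA, ← Finset.sum_neg_distrib]
  simp [Real.negMulLog]

lemma entropy_add_le {A B : Matrix n n ℂ} (hA : A.PosDef) (hB : B.PosDef) :
    entropy (A + B) ≤ entropy A + entropy B := by
  have h1 := relEnt_nonpos hA (le_add_of_nonneg_right hB.posSemidef.nonneg : A ≤ A + B)
  have h2 := relEnt_nonpos hB (le_add_of_nonneg_left hA.posSemidef.nonneg : B ≤ A + B)
  have h3 := re_trace_cfc_mul_log (hA.add hB).1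
  rw [← mul_cfc_log (hA.add hB).1, Matrix.add_mul, trace_add, Complex.add_re] at h3
  rw [relEnt, re_trace_cfc_mul_log hA.1] at h1
  rw [relEnt, re_trace_cfc_mul_log hB.1] at h2
  linarith

lemma relEnt_smul_one {A : Matrix n n ℂ} (hA : A.IsHermitian) {c : ℝ} (hc : 0 < c) :
    relEnt A (c • 1) = -entropy A - Real.log c * A.trace.re := by
  have h : cfc Real.log (1 : Matrix n n ℂ) = 0 := CFC.log_one
  rw [relEnt_smul PosDef.one hc, relEnt, re_trace_cfc_mul_log hA, h]
  simp

omit [DecidableEq n] in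
lemma re_trace_pos [Nonempty n] {A : Matrix n n ℂ} (hA : A.PosDef) : 0 < A.trace.re :=
  (Complex.lt_def.mp hA.trace_pos).1

/-- Superadditivity (equivalently, concavity) of the entropy. -/
lemma le_entropy_add [Nonempty n] {A B : Matrix n n ℂ} (hA : A.PosDef) (hB : B.PosDef) :
    entropy A + entropy B + Real.negMulLog (A + B).trace.re
      ≤ entropy (A + B) + Real.negMulLog A.trace.re + Real.negMulLog B.trace.re := by
  have ha := re_trace_pos hA
  have hb := re_trace_pos hB
  have h := relEnt_add_le hA hB ((PosDef.one (n := n) (R := ℂ)).smul ha)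
    ((PosDef.one (n := n) (R := ℂ)).smul hb)
  rw [← add_smul, relEnt_smul_one hA.1 ha, relEnt_smul_one hB.1 hb,
    relEnt_smul_one (hA.add hB).1 (add_pos ha hb)] at h
  simp only [trace_add, Complex.add_re, Real.negMulLog] at h ⊢
  linarith

lemma tendsto_entropy_add_smul_one {A : Matrix n n ℂ} (hA : A.IsHermitian) :
    Filter.Tendsto (fun δ : ℝ => entropy (A + δ • 1)) (nhds 0) (nhds (entropy A)) := by
  have hA' : IsSelfAdjoint A := hA
  have h (δ : ℝ) : entropy (A + δ • 1) = ∑ i, Real.negMulLog (hA.eigenvalues i + δ) := by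
    have : A + δ • 1 = cfc (fun x => x + δ) A := by
      rw [cfc_add_const δ (fun x => x) A, cfc_id' ℝ A, Algebra.algebraMap_eq_smul_one]
    rw [entropy, this, ← cfc_comp' Real.negMulLog (fun x => x + δ) A, re_trace_cfc hA]
  have hc : Continuous fun δ : ℝ => ∑ i, Real.negMulLog (hA.eigenvalues i + δ) := by fun_prop
  simp only [h]
  refine (hc.tendsto 0).trans_eq ?_
  rw [entropy, re_trace_cfc hA]
  simp

lemma vnEnt_eq_entropy {A : Matrix n n ℂ} (hA : A.IsHermitian) (htr : A.trace = 1) :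
    vnEnt A = entropy A := by
  have h : ∑ i, hA.eigenvalues i = 1 := by
    have := hA.trace_eq_sum_eigenvalues
    rw [htr] at this
    simpa using (congrArg Complex.re this).symm
  rw [vnEnt, dif_pos hA, h, Real.negMulLog_one, sub_zero, entropy, re_trace_cfc hA]

lemma traceNorm_eq {A : Matrix n n ℂ} (hA : A.IsHermitian) :
    traceNorm A = (cfc (fun x : ℝ => |x|) A).trace.re := by
  have hA' : IsSelfAdjoint A := hA
  have h : Aᴴ * A = cfc (fun x : ℝ => x * x) A := by
    rw [cfc_mul (fun x => x) (fun x => x) A, cfc_id' ℝ A, hA.eq]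
  rw [traceNorm, ← re_trace_cfc _ Real.sqrt, h, ← cfc_comp' Real.sqrt (fun x => x * x) A]
  simp only [Real.sqrt_mul_self_eq_abs]

/-- The Jordan decomposition of a traceless Hermitian matrix. -/
lemma exists_posSemidef_sub_eq {A : Matrix n n ℂ} (hA : A.IsHermitian) (htr : A.trace = 0) :
    ∃ P N : Matrix n n ℂ, P.PosSemidef ∧ N.PosSemidef ∧ P - N = A ∧
      P.trace.re = traceNorm A / 2 ∧ N.trace.re = traceNorm A / 2 := by
  have hA' : IsSelfAdjoint A := hA
  have hP : 0 ≤ cfc (fun x : ℝ => max x 0) A := cfc_nonneg fun x _ => le_max_right _ _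
  have hN : 0 ≤ cfc (fun x : ℝ => max (-x) 0) A := cfc_nonneg fun x _ => le_max_right _ _
  have hsub : cfc (fun x : ℝ => max x 0) A - cfc (fun x : ℝ => max (-x) 0) A = A := by
    rw [← cfc_sub _ _ A]
    conv_rhs => rw [← cfc_id' ℝ A]
    congr 1
    funext x
    exact max_zero_sub_eq_self x
  have hadd : cfc (fun x : ℝ => max x 0) A + cfc (fun x : ℝ => max (-x) 0) A
      = cfc (fun x : ℝ => |x|) A := by
    rw [← cfc_add A _ _]
    congr 1
    funext x
    exact max_zero_add_max_neg_zero_eq_abs_self x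
  have h1 := congrArg (fun M => M.trace.re) hsub
  have h2 := congrArg (fun M => M.trace.re) hadd
  simp only [trace_sub, trace_add, Complex.sub_re, Complex.add_re, htr, Complex.zero_re,
    ← traceNorm_eq hA] at h1 h2
  exact ⟨_, _, hP.posSemidef, hN.posSemidef, hsub, by linarith, by linarith⟩

end Entropy

section ConditionalEntropy

open scoped MatrixOrder Matrix.Norms.L2Operator Kronecker

variable {a b : Type*} [Fintype a] [Fintype b] [DecidableEq a] [DecidableEq b]

omit [Fintype b] [DecidableEq a] [DecidableEq b] in
lemma mSnd_add (X Y : Matrix (a × b) (a × b) ℂ) : mSnd (X + Y) = mSnd X + mSnd Y := by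
  ext i j
  simp [mSnd, Finset.sum_add_distrib]

omit [DecidableEq a] [DecidableEq b] in
lemma trace_mSnd (X : Matrix (a × b) (a × b) ℂ) : (mSnd X).trace = X.trace := by
  simp [mSnd, trace, Fintype.sum_prod_type_right]

omit [Fintype b] in
lemma mSnd_smul_one (δ : ℝ) :
    mSnd (δ • (1 : Matrix (a × b) (a × b) ℂ)) = (δ * Fintype.card a) • 1 := by
  ext i j
  by_cases h : i = j <;> simp [mSnd, one_apply, h, mul_comm]

omit [Fintype b] [DecidableEq a] [DecidableEq b] in
lemma mSnd_eq_sum (X : Matrix (a × b) (a × b) ℂ) :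
    mSnd X = ∑ k, X.submatrix (Prod.mk k) (Prod.mk k) := by
  ext i j
  simp [mSnd, Matrix.sum_apply]

omit [Fintype b] [DecidableEq a] [DecidableEq b] in
lemma Matrix.PosSemidef.mSnd {X : Matrix (a × b) (a × b) ℂ} (hX : X.PosSemidef) :
    (mSnd X).PosSemidef := by
  rw [mSnd_eq_sum]
  exact posSemidef_sum _ fun k _ => hX.submatrix _

omit [Fintype b] [DecidableEq b] in
lemma Matrix.PosDef.mSnd [Nonempty a] {X : Matrix (a × b) (a × b) ℂ} (hX : X.PosDef) :
    (mSnd X).PosDef := by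
  obtain ⟨k⟩ := ‹Nonempty a›
  rw [mSnd_eq_sum, ← Finset.add_sum_erase _ _ (Finset.mem_univ k)]
  exact (hX.submatrix (Prod.mk_right_injective k)).add_posSemidef
    (posSemidef_sum _ fun l _ => hX.posSemidef.submatrix _)

omit [DecidableEq b] in
lemma trace_mul_one_kronecker (X : Matrix (a × b) (a × b) ℂ) (Z : Matrix b b ℂ) :
    (X * ((1 : Matrix a a ℂ) ⊗ₖ Z)).trace = (mSnd X * Z).trace := by
  simp only [trace, diag_apply, mul_apply, Fintype.sum_prod_type, kroneckerMap_apply, mSnd,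
    of_apply, one_apply, ite_mul, one_mul, zero_mul, mul_ite, mul_zero, Finset.sum_mul]
  rw [Finset.sum_comm]
  refine Finset.sum_congr rfl fun p _ => (Finset.sum_congr rfl fun i _ => ?_).trans Finset.sum_comm
  rw [Fintype.sum_eq_single i fun k hk => by simp [hk]]
  simp

/-- Tensoring with the identity as a homomorphism of star algebras. -/
def oneKronecker (a : Type*) [Fintype a] [DecidableEq a] :
    Matrix b b ℂ →⋆ₐ[ℝ] Matrix (a × b) (a × b) ℂ where
  toFun Z := (1 : Matrix a a ℂ) ⊗ₖ Z
  map_one' := one_kronecker_one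
  map_mul' X Y := by rw [← mul_kronecker_mul, Matrix.one_mul]
  map_zero' := kronecker_zero _
  map_add' := kronecker_add _
  commutes' r := by
    simp only [Algebra.algebraMap_eq_smul_one, kronecker_smul, one_kronecker_one]
  map_star' X := by
    simp only [star_eq_conjTranspose, conjTranspose_kronecker, conjTranspose_one]

lemma cfc_one_kronecker {Z : Matrix b b ℂ} (hZ : Z.IsHermitian) (f : ℝ → ℝ) :
    cfc f ((1 : Matrix a a ℂ) ⊗ₖ Z) = (1 : Matrix a a ℂ) ⊗ₖ cfc f Z := by
  have hZ' : IsSelfAdjoint Z := hZ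
  have hc := LinearMap.continuous_of_finiteDimensional
    (oneKronecker (b := b) a).toAlgHom.toLinearMap
  exact ((oneKronecker a).map_cfc f Z (continuousOn_real_spectrum Z f) hc hZ'
    (hZ'.map (oneKronecker a))).symm

lemma sub_of_one_posSemidef [Nonempty a] :
    ((Fintype.card a : ℝ) • (1 : Matrix a a ℂ) - Matrix.of fun _ _ => 1).PosSemidef := by
  set J : Matrix a a ℂ := Matrix.of fun _ _ => 1 with hJ
  set M := (Fintype.card a : ℝ) • (1 : Matrix a a ℂ) - J with hM
  have hd : (0 : ℝ) < Fintype.card a := by exact_mod_cast Fintype.card_pos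
  have hJJ : J * J = (Fintype.card a : ℝ) • J := by
    ext i j
    simp [hJ, mul_apply]
  have hJH : Jᴴ = J := by
    ext i j
    simp [hJ]
  have h : M = (Fintype.card a : ℝ)⁻¹ • (Mᴴ * M) := by
    rw [eq_inv_smul_iff₀ hd.ne', hM, conjTranspose_sub, conjTranspose_smul, conjTranspose_one, hJH,
      star_trivial, Matrix.sub_mul, Matrix.mul_sub J, hJJ, Matrix.smul_mul, Matrix.one_mul,
      Matrix.mul_smul, Matrix.mul_one, sub_self, sub_zero]
  rw [h]
  exact (posSemidef_conjTranspose_mul_self M).smul (inv_nonneg.mpr hd.le)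

omit [DecidableEq b] in
/-- The operator inequality `X ≤ dim A • (1 ⊗ Tr_A X)`. -/
lemma le_card_smul_one_kronecker_mSnd [Nonempty a] {X : Matrix (a × b) (a × b) ℂ}
    (hX : X.PosSemidef) :
    X ≤ (Fintype.card a : ℝ) • ((1 : Matrix a a ℂ) ⊗ₖ mSnd X) := by
  have h1 := hX.hadamard ((sub_of_one_posSemidef (a := a)).submatrix (Prod.fst : a × b → a))
  have h2 : (∑ m, (diagonal (fun i : a => if i = m then (0 : ℂ) else 1)) ⊗ₖ
      X.submatrix (Prod.mk m) (Prod.mk m)).PosSemidef := by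
    refine posSemidef_sum _ fun m _ => PosSemidef.kronecker (PosSemidef.diagonal fun i => ?_)
      (hX.submatrix _)
    by_cases h : i = m <;> simp [h]
  have h3 := h1.add (h2.smul (Nat.cast_nonneg (α := ℝ) (Fintype.card a)))
  rw [Matrix.le_iff]
  convert h3 using 1
  ext ⟨i, p⟩ ⟨j, q⟩
  by_cases h : i = j
  · subst h
    simp [Matrix.sum_apply, mSnd, Finset.sum_ite, Finset.filter_ne, Finset.sum_erase_eq_sub]
    ring
  · simp [Matrix.sum_apply, h]

/-- The conditional entropy without the normalization by the trace. -/
def condEntropy (X : Matrix (a × b) (a × b) ℂ) : ℝ := entropy X - entropy (mSnd X)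

lemma relEnt_one_kronecker_mSnd {X : Matrix (a × b) (a × b) ℂ} (hX : X.PosSemidef) :
    relEnt X ((1 : Matrix a a ℂ) ⊗ₖ mSnd X) = -condEntropy X := by
  rw [relEnt, cfc_one_kronecker hX.mSnd.1, trace_mul_one_kronecker, mul_cfc_log hX.mSnd.1,
    re_trace_cfc_mul_log hX.1, re_trace_cfc_mul_log hX.mSnd.1, condEntropy]
  ring

section Nonempty

variable [Nonempty a]

/-- Strong subadditivity, as superadditivity (equivalently, concavity) of the conditional
entropy. -/
lemma condEntropy_add_le {X Y : Matrix (a × b) (a × b) ℂ} (hX : X.PosDef) (hY : Y.PosDef) :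
    condEntropy X + condEntropy Y ≤ condEntropy (X + Y) := by
  have h := relEnt_add_le hX hY ((PosDef.one (n := a) (R := ℂ)).kronecker hX.mSnd)
    ((PosDef.one (n := a) (R := ℂ)).kronecker hY.mSnd)
  rw [← kronecker_add, ← mSnd_add, relEnt_one_kronecker_mSnd hX.posSemidef,
    relEnt_one_kronecker_mSnd hY.posSemidef,
    relEnt_one_kronecker_mSnd (hX.add hY).posSemidef] at h
  linarith

lemma abs_condEntropy_le {X : Matrix (a × b) (a × b) ℂ} (hX : X.PosDef) :
    |condEntropy X| ≤ X.trace.re * Real.log (Fintype.card a) := by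
  have hd : (0 : ℝ) < Fintype.card a := by exact_mod_cast Fintype.card_pos
  have hK : ((1 : Matrix a a ℂ) ⊗ₖ mSnd X).PosDef := PosDef.one.kronecker hX.mSnd
  have h1 := relEnt_nonpos hX (le_card_smul_one_kronecker_mSnd hX.posSemidef)
  have h2 := trace_sub_trace_le_relEnt hX (hK.smul (inv_pos.mpr hd))
  have htr : ((Fintype.card a : ℝ)⁻¹ • ((1 : Matrix a a ℂ) ⊗ₖ mSnd X)).trace.re = X.trace.re := by
    rw [trace_smul, trace_kronecker, trace_one, trace_mSnd, Complex.smul_re, smul_eq_mul,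
      Complex.mul_re, Complex.natCast_re, Complex.natCast_im, zero_mul, sub_zero,
       inv_mul_cancel_left₀ hd.ne']
  rw [relEnt_smul hK hd, relEnt_one_kronecker_mSnd hX.posSemidef] at h1
  rw [htr, relEnt_smul hK (inv_pos.mpr hd), relEnt_one_kronecker_mSnd hX.posSemidef,
    Real.log_inv] at h2
  rw [abs_le]
  constructor <;> linarith

lemma condEntropy_add_le_add [Nonempty b] {X Y : Matrix (a × b) (a × b) ℂ} (hX : X.PosDef)
    (hY : Y.PosDef) :
    condEntropy (X + Y) + Real.negMulLog (X + Y).trace.re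
      ≤ condEntropy X + condEntropy Y + Real.negMulLog X.trace.re
        + Real.negMulLog Y.trace.re := by
  have h1 := entropy_add_le hX hY
  have h2 := le_entropy_add hX.mSnd hY.mSnd
  simp only [condEntropy, mSnd_add, trace_add, trace_mSnd, Complex.add_re] at h1 h2 ⊢
  linarith

lemma condEntropy_sub_le_of_posDef [Nonempty b] {X Y Z W : Matrix (a × b) (a × b) ℂ}
    (hX : X.PosDef) (hY : Y.PosDef) (hZ : Z.PosDef) (hW : W.PosDef) (h : X + Y = Z + W) :
    condEntropy X - condEntropy Z ≤ (Y.trace.re + W.trace.re) * Real.log (Fintype.card a)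
      + Real.negMulLog Z.trace.re + Real.negMulLog W.trace.re
      - Real.negMulLog (Z.trace.re + W.trace.re) := by
  have h1 := condEntropy_add_le hX hY
  have h2 := condEntropy_add_le_add hZ hW
  have h3 := abs_le.mp (abs_condEntropy_le hY)
  have h4 := abs_le.mp (abs_condEntropy_le hW)
  rw [trace_add, Complex.add_re] at h2
  rw [h] at h1
  linarith

omit [Nonempty a] in
lemma tendsto_condEntropy_add_smul_one {X : Matrix (a × b) (a × b) ℂ} (hX : X.PosSemidef) :
    Filter.Tendsto (fun δ : ℝ => condEntropy (X + δ • 1)) (nhds 0) (nhds (condEntropy X)) := by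
  have h : Filter.Tendsto (fun δ : ℝ => δ * Fintype.card a) (nhds 0) (nhds 0) := by
    simpa using (Filter.tendsto_id (α := ℝ) (x := nhds 0)).mul_const (Fintype.card a : ℝ)
  simp only [condEntropy, mSnd_add, mSnd_smul_one]
  exact (tendsto_entropy_add_smul_one hX.1).sub ((tendsto_entropy_add_smul_one hX.mSnd.1).comp h)

lemma condEntropy_sub_le [Nonempty b] {X Y Z W : Matrix (a × b) (a × b) ℂ}
    (hX : X.PosSemidef) (hY : Y.PosSemidef) (hZ : Z.PosSemidef) (hW : W.PosSemidef)
    (h : X + Y = Z + W) :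
    condEntropy X - condEntropy Z ≤ (Y.trace.re + W.trace.re) * Real.log (Fintype.card a)
      + Real.negMulLog Z.trace.re + Real.negMulLog W.trace.re
      - Real.negMulLog (Z.trace.re + W.trace.re) := by
  have htr (M : Matrix (a × b) (a × b) ℂ) :
      Filter.Tendsto (fun δ : ℝ => (M + δ • 1).trace.re) (nhds 0) (nhds M.trace.re) := by
    have hc : Continuous fun δ : ℝ => (M + δ • 1).trace.re := by
      simp only [trace_add, trace_smul, Complex.add_re, Complex.smul_re]
      fun_prop
    simpa using hc.tendsto 0
  have hneg {f : ℝ → ℝ} {c : ℝ} (hf : Filter.Tendsto f (nhds 0) (nhds c)) :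
      Filter.Tendsto (fun δ => Real.negMulLog (f δ)) (nhds 0) (nhds (Real.negMulLog c)) :=
    (Real.continuous_negMulLog.tendsto c).comp hf
  have hl := (tendsto_condEntropy_add_smul_one hX).sub (tendsto_condEntropy_add_smul_one hZ)
  have hr := ((((htr Y).add (htr W)).mul_const (Real.log (Fintype.card a))).add
    (hneg (htr Z))).add (hneg (htr W)) |>.sub (hneg ((htr Z).add (htr W)))
  refine le_of_tendsto_of_tendsto (hl.mono_left nhdsWithin_le_nhds)
    (hr.mono_left nhdsWithin_le_nhds) (b := nhdsWithin 0 (Set.Ioi 0)) ?_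
  filter_upwards [self_mem_nhdsWithin] with δ hδ
  have hpos : (δ • (1 : Matrix (a × b) (a × b) ℂ)).PosDef := PosDef.one.smul hδ
  refine condEntropy_sub_le_of_posDef (PosDef.posSemidef_add hX hpos)
    (PosDef.posSemidef_add hY hpos) (PosDef.posSemidef_add hZ hpos)
    (PosDef.posSemidef_add hW hpos) ?_
  rw [add_add_add_comm, h, add_add_add_comm]

end Nonempty

lemma condEnt_eq_condEntropy {ω : Matrix (a × b) (a × b) ℂ} (h : IsState ω) :
    condEnt ω = condEntropy ω := by
  rw [condEnt, condEntropy, vnEnt_eq_entropy h.1.1 h.2,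
    vnEnt_eq_entropy h.1.mSnd.1 ((trace_mSnd ω).trans h.2)]

lemma one_add_mul_binEntropy {ε : ℝ} (hε : 0 ≤ ε) :
    (1 + ε) * Real.binEntropy (ε / (1 + ε)) = Real.negMulLog ε - Real.negMulLog (1 + ε) := by
  have h1 : 1 + ε ≠ 0 := by positivity
  have h2 : 1 - ε / (1 + ε) = (1 + ε)⁻¹ := by
    field_simp
    ring
  rcases hε.eq_or_lt with rfl | hε
  · simp
  rw [Real.binEntropy_eq_negMulLog_add_negMulLog_one_sub, h2]
  simp only [Real.negMulLog, Real.log_div hε.ne' h1, Real.log_inv]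
  field_simp
  ring

lemma abs_condEnt_sub_le {ω₁ ω₂ : Matrix (a × b) (a × b) ℂ} (h1 : IsState ω₁) (h2 : IsState ω₂) :
    |condEnt ω₁ - condEnt ω₂|
      ≤ 2 * (traceNorm (ω₁ - ω₂) / 2) * Real.log (Fintype.card a)
        + (1 + traceNorm (ω₁ - ω₂) / 2) *
            Real.binEntropy ((traceNorm (ω₁ - ω₂) / 2) / (1 + traceNorm (ω₁ - ω₂) / 2)) := by
  have hne : Nonempty (a × b) := by
    by_contra hne
    rw [not_nonempty_iff] at hne
    have := h1.2
    simp [trace] at this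
  have : Nonempty a := hne.map Prod.fst
  have : Nonempty b := hne.map Prod.snd
  obtain ⟨P, N, hP, hN, hPN, hPt, hNt⟩ := exists_posSemidef_sub_eq (h1.1.1.sub h2.1.1)
    (by rw [trace_sub, h1.2, h2.2, sub_self])
  have hsum : ω₁ + N = ω₂ + P := by
    rw [sub_eq_sub_iff_add_eq_add] at hPN
    rw [add_comm ω₂, hPN]
  have hε : 0 ≤ traceNorm (ω₁ - ω₂) / 2 := by
    rw [← hPt]
    exact (Complex.le_def.mp hP.trace_nonneg).1
  have e1 := condEntropy_sub_le h1.1 hN h2.1 hP hsum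
  have e2 := condEntropy_sub_le h2.1 hP h1.1 hN hsum.symm
  rw [h2.2, hPt, hNt, Complex.one_re, Real.negMulLog_one] at e1
  rw [h1.2, hPt, hNt, Complex.one_re, Real.negMulLog_one] at e2
  rw [condEnt_eq_condEntropy h1, condEnt_eq_condEntropy h2, one_add_mul_binEntropy hε, abs_le]
  constructor <;> linarith

end ConditionalEntropy

/-- Continuity bound for the conditional entropy:
`|H(A|B)_{ω¹} − H(A|B)_{ω²}| ≤ 2ε log dim H_A + (1+ε)h₂(ε/(1+ε))` when `ε = ½‖ω¹−ω²‖₁ < 1`. -/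
theorem condEnt_continuity_bound {a b : Type*} [Fintype a] [DecidableEq a] [Fintype b]
    [DecidableEq b] (ω₁ ω₂ : Matrix (a × b) (a × b) ℂ) (h1 : IsState ω₁) (h2 : IsState ω₂)
    (hε : traceNorm (ω₁ - ω₂) / 2 < 1) :
    |condEnt ω₁ - condEnt ω₂|
      ≤ 2 * (traceNorm (ω₁ - ω₂) / 2) * Real.log (Fintype.card a)
        + (1 + traceNorm (ω₁ - ω₂) / 2) *
            Real.binEntropy ((traceNorm (ω₁ - ω₂) / 2) / (1 + traceNorm (ω₁ - ω₂) / 2)) :=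
  abs_condEnt_sub_le h1 h2
end
end
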